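/- arXiv:2003.12134 — 8 statements merged into one kernel-verified Lean document; each statement's English description precedes it below -/
import Mathlib

section
/- Let {C_1, …, C_q} be a family of cycles in the complete graph G on V, each containing exactly one depot of D, whose vertex sets together cover V. Then there exists a family {C'_1, …, C'_{q'}} of at most q pairwise edge-disjoint cycles of G, each containing exactly one depot of D, whose vertex sets together cover V, and whose maximum cycle weight satisfies max_j w(C'_j) ≤ max_j w(C_j). -/
/-- The weight of a cycle represented by the list of its vertices in cyclic
order: the sum of the weights of its (cyclically) consecutive pairs. -/
def cycleWeight {V : Type} (w : V → V → ℝ) (l : List V) : ℝ :=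
  ((l.zip (l.rotate 1)).map fun p => w p.1 p.2).sum

/-- The edges of a cycle represented by the list of its vertices in cyclic
order, as unordered pairs. -/
def cycleEdges {V : Type} (l : List V) : List (Sym2 V) :=
  (l.zip (l.rotate 1)).map fun p => s(p.1, p.2)

def pathW {V : Type} (w : V → V → ℝ) : V → List V → V → ℝ
  | a, [], b => w a b
  | a, x :: l, b => w a x + pathW w x l b

theorem pathW_eq {V : Type} (w : V → V → ℝ) (l : List V) (a b : V) :
    (((a :: l).zip (l ++ [b])).map fun p => w p.1 p.2).sum = pathW w a l b := by
  induction l generalizing a with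
  | nil => simp [pathW]
  | cons x l ih =>
    have := ih x
    simp only [List.cons_append, List.zip_cons_cons, List.map_cons, List.sum_cons, pathW] at this ⊢
    rw [← this]

theorem cycleWeight_cons {V : Type} (w : V → V → ℝ) (x : V) (l : List V) :
    cycleWeight w (x :: l) = pathW w x l x := by
  rw [← pathW_eq]; simp [cycleWeight]

theorem pathW_end {V : Type} (w : V → V → ℝ)
    (htri : ∀ u v x, w u x ≤ w u v + w v x) (l : List V) (a b c : V) :
    pathW w a l c ≤ pathW w a l b + w b c := by
  induction l generalizing a with
  | nil => exact htri _ _ _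
  | cons x l ih => have := ih x; simp only [pathW]; linarith

theorem pathW_start {V : Type} (w : V → V → ℝ)
    (htri : ∀ u v x, w u x ≤ w u v + w v x) (l : List V) (a b c : V) :
    pathW w a l b ≤ w a c + pathW w c l b := by
  cases l with
  | nil => exact htri _ _ _
  | cons x l => have := htri a c x; simp only [pathW]; linarith

theorem pathW_sub {V : Type} (w : V → V → ℝ)
    (htri : ∀ u v x, w u x ≤ w u v + w v x) {l' l : List V} (h : l'.Sublist l) (a b : V) :
    pathW w a l' b ≤ pathW w a l b := by
  induction h generalizing a with
  | slnil => exact le_rfl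
  | cons x h ih => exact (ih a).trans (pathW_start w htri _ a b x)
  | cons_cons x h ih => have := ih x; simp only [pathW]; linarith

theorem cycleWeight_sub {V : Type} (w : V → V → ℝ)
    (hnonneg : ∀ u v, 0 ≤ w u v)
    (htri : ∀ u v x, w u x ≤ w u v + w v x) {l' l : List V} (h : l'.Sublist l) :
    cycleWeight w l' ≤ cycleWeight w l := by
  induction h with
  | slnil => exact le_rfl
  | @cons l₁ l x h ih =>
    refine ih.trans ?_
    cases l with
    | nil => simp [cycleWeight, hnonneg]
    | cons y l =>
      rw [cycleWeight_cons, cycleWeight_cons]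
      have := pathW_end w htri l y x y
      simp only [pathW]; linarith
  | cons_cons x h ih =>
    rw [cycleWeight_cons, cycleWeight_cons]
    exact pathW_sub w htri h x x

theorem self_edge {V : Type} {l : List V} (hl : l.Nodup) {a : V}
    (h : (a, a) ∈ l.zip (l.rotate 1)) : l = [a] := by
  obtain ⟨i, hi, he⟩ := List.mem_iff_getElem.1 h
  simp only [List.length_zip, List.length_rotate, min_self] at hi
  rw [List.getElem_zip, Prod.mk.injEq, List.getElem_rotate] at he
  have h2 := (hl.getElem_inj_iff).1 (he.1.trans he.2.symm)
  have h1 : l.length = 1 := by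
    by_cases hh : i + 1 < l.length
    · rw [Nat.mod_eq_of_lt hh] at h2; omega
    · have : i + 1 = l.length := by omega
      rw [this, Nat.mod_self] at h2; omega
  obtain ⟨b, rfl⟩ := List.length_eq_one_iff.1 h1
  simp at h
  simp [h]

theorem mem_edge {V : Type} {l : List V} {a b : V}
    (h : (a, b) ∈ l.zip (l.rotate 1)) : a ∈ l ∧ b ∈ l := by
  have := List.of_mem_zip h
  simpa using this

/-- from any family of cycles of the complete graph on `V`, each
containing exactly one depot of `D`, whose vertex sets together cover `V`, one
can produce a family of at most as many pairwise edge-disjoint such cycles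
covering `V` whose maximum cycle weight does not increase. -/
theorem stmt0 {V : Type} [Fintype V] [DecidableEq V]
    (w : V → V → ℝ)
    (hzero : ∀ v, w v v = 0)
    (hnonneg : ∀ u v, 0 ≤ w u v)
    (hsymm : ∀ u v, w u v = w v u)
    (htri : ∀ u v x, w u x ≤ w u v + w v x)
    (D : Finset V) (hD : D.Nonempty)
    (q : ℕ) (C : Fin q → List V)
    (hnodup : ∀ j, (C j).Nodup) (hne : ∀ j, C j ≠ [])
    (hdep : ∀ j, ((C j).toFinset ∩ D).card = 1)
    (hcov : ∀ v : V, ∃ j, v ∈ C j) :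
    ∃ (q' : ℕ) (_ : q' ≤ q) (C' : Fin q' → List V),
      (∀ j, (C' j).Nodup) ∧ (∀ j, C' j ≠ []) ∧
      (∀ i j, i ≠ j →
        Disjoint (cycleEdges (C' i)).toFinset (cycleEdges (C' j)).toFinset) ∧
      (∀ j, ((C' j).toFinset ∩ D).card = 1) ∧
      (∀ v : V, ∃ j, v ∈ C' j) ∧
      (⨆ j, cycleWeight w (C' j)) ≤ ⨆ j, cycleWeight w (C j) := by
  classical
  choose f hf using hcov
  let F : Fin q → List V := fun j => (C j).filter (fun v => decide (v ∈ D ∨ f v = j))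
  have hF : ∀ j v, v ∈ F j ↔ v ∈ C j ∧ (v ∈ D ∨ f v = j) := by
    intro j v; simp [F]
  have hFsub : ∀ j, (F j).Sublist (C j) := fun j => List.filter_sublist
  have hFnd : ∀ j, (F j).Nodup := fun j => (hFsub j).nodup (hnodup j)
  have hFD : ∀ j, (F j).toFinset ∩ D = (C j).toFinset ∩ D := by
    intro j; ext v; simp only [Finset.mem_inter, List.mem_toFinset, hF]; tauto
  have huniq : ∀ j a b, a ∈ F j → b ∈ F j → a ∈ D → b ∈ D → a = b := by
    intro j a b ha hb haD hbD
    have h1 := hdep j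
    rw [← hFD] at h1
    exact Finset.card_le_one.1 h1.le a (by simp [ha, haD]) b (by simp [hb, hbD])
  let J : Finset (Fin q) := Finset.univ.image f
  have hJ : ∀ j ∈ J, ∃ v, f v = j := by simp [J]
  let e := J.equivFin.symm
  have hkey : ∀ i ∈ J, ∀ j ∈ J, i ≠ j →
      Disjoint (cycleEdges (F i)).toFinset (cycleEdges (F j)).toFinset := by
    intro i hi j hj hij
    rw [Finset.disjoint_left]
    intro s hs ht
    simp only [cycleEdges, List.mem_toFinset, List.mem_map, Prod.exists] at hs ht
    obtain ⟨a, b, hab, rfl⟩ := hs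
    obtain ⟨c, d, hcd, hs⟩ := ht
    have h1 := mem_edge hab
    have h2 := mem_edge hcd
    have hcom : ∀ v, v ∈ F i → v ∈ F j → v ∈ D := by
      intro v hv hv'
      rw [hF] at hv hv'
      by_contra hvD
      exact hij ((hv.2.resolve_left hvD).symm.trans (hv'.2.resolve_left hvD))
    have h3 : a ∈ F j ∧ b ∈ F j := by
      rcases Sym2.eq_iff.1 hs with ⟨rfl, rfl⟩ | ⟨rfl, rfl⟩
      · exact h2
      · exact h2.symm
    have hEq : a = b := huniq i a b h1.1 h1.2 (hcom a h1.1 h3.1) (hcom b h1.2 h3.2)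
    subst hEq
    have hca : c = a ∧ d = a := by
      rcases Sym2.eq_iff.1 hs with h | h <;> exact h
    obtain ⟨rfl, rfl⟩ := hca
    have e1 := self_edge (hFnd i) hab
    have e2 := self_edge (hFnd j) hcd
    have key : ∀ k ∈ J, F k = [d] → f d = k := by
      intro k hk hkd
      obtain ⟨v, hv⟩ := hJ k hk
      have : v ∈ F k := by rw [hF]; exact ⟨hv ▸ hf v, Or.inr hv⟩
      rw [hkd, List.mem_singleton] at this
      rw [← this]; exact hv
    exact hij ((key i hi e1).symm.trans (key j hj e2))
  have hcw : ∀ j, 0 ≤ cycleWeight w (C j) := by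
    intro j
    apply List.sum_nonneg
    intro x hx
    obtain ⟨p, _, rfl⟩ := List.mem_map.1 hx
    exact hnonneg _ _
  refine ⟨J.card, by simpa using Finset.card_le_univ J, fun j => F (e j), fun j => hFnd _, ?_, ?_, ?_, ?_, ?_⟩
  · intro j h0
    change F (e j) = [] at h0
    have := hdep (e j)
    rw [← hFD, h0] at this
    simp at this
  · intro i j hij
    exact hkey _ (e i).2 _ (e j).2 (fun h => hij (e.injective (Subtype.ext h)))
  · intro j; rw [hFD]; exact hdep _
  · intro v
    refine ⟨e.symm ⟨f v, by simp [J]⟩, ?_⟩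
    rw [hF]
    simp [hf]
  · apply Real.iSup_le
    · intro j
      refine (cycleWeight_sub w hnonneg htri (hFsub (e j))).trans ?_
      exact le_ciSup (f := fun j => cycleWeight w (C j)) (Set.finite_range _).bddAbove (e j : Fin q)
    · exact Real.iSup_nonneg hcw
end

section
/- Let T be a tree that is a subgraph of the complete graph G on V with metric edge weights w, and let d be a vertex of T. Then there exists a closed walk in G that starts and ends at d, visits every vertex of T, visits each vertex of T other than d exactly once, and has total weight at most 2·w(T). -/
/-- The weight of a walk, given as the list of its vertices in order: the sum
of the weights of its consecutive pairs (with multiplicity). -/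
def walkWeight {V : Type} (w : V → V → ℝ) (p : List V) : ℝ :=
  ((p.zip p.tail).map fun q => w q.1 q.2).sum

theorem walkWeight_cc {V : Type} (w : V → V → ℝ) (a b : V) (l : List V) :
    walkWeight w (a :: b :: l) = w a b + walkWeight w (b :: l) := by
  simp [walkWeight]

theorem walkWeight_ins {V : Type} (w : V → V → ℝ)
    (hsymm : ∀ u v, w u v = w v u)
    (htri : ∀ u v x, w u x ≤ w u v + w v x) (u v x : V) (c : List V) :
    ∀ a : List V, walkWeight w (a ++ u :: v :: x :: c) ≤
      walkWeight w (a ++ u :: x :: c) + 2 * w u v := by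
  intro a
  induction a with
  | nil =>
    simp only [List.nil_append, walkWeight_cc]
    have := htri v u x
    have := hsymm u v
    linarith
  | cons y a ih =>
    cases a with
    | nil =>
      simp only [List.nil_append, List.cons_append, walkWeight_cc] at ih ⊢
      linarith
    | cons z a =>
      simp only [List.cons_append, walkWeight_cc] at ih ⊢
      linarith

theorem tour_aux {V : Type} [Fintype V] [DecidableEq V]
    (w : V → V → ℝ)
    (hzero : ∀ v, w v v = 0)
    (hsymm : ∀ u v, w u v = w v u)
    (htri : ∀ u v x, w u x ≤ w u v + w v x)
    (T : (⊤ : SimpleGraph V).Subgraph)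
    (hconn : T.Connected)
    (d : V) (hd : d ∈ T.verts) (n : ℕ) :
    ∃ (l : List V) (F : Finset (Sym2 V)), (d :: l).Nodup ∧
      (∀ e ∈ F, e ∈ T.edgeSet) ∧ (∀ e ∈ F, ∀ v ∈ e, v ∈ d :: l) ∧
      walkWeight w (d :: l ++ [d]) ≤ 2 * ∑ e ∈ F, Sym2.lift ⟨w, hsymm⟩ e ∧
      ((∀ v ∈ T.verts, v ∈ d :: l) ∨ l.length = n) := by
  induction n with
  | zero => exact ⟨[], ∅, by simp, by simp, by simp, by simp [walkWeight, hzero], by simp⟩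
  | succ n ih =>
    obtain ⟨l, F, hnd, hF, hFv, hw, hall | hlen⟩ := ih
    · exact ⟨l, F, hnd, hF, hFv, hw, Or.inl hall⟩
    by_cases hall : ∀ v ∈ T.verts, v ∈ d :: l
    · exact ⟨l, F, hnd, hF, hFv, hw, Or.inl hall⟩
    push Not at hall
    obtain ⟨z, hz, hzl⟩ := hall
    obtain ⟨p⟩ := hconn.coe.preconnected ⟨d, hd⟩ ⟨z, hz⟩
    obtain ⟨e, -, he1, he2⟩ := p.exists_boundary_dart {x | (x : V) ∈ d :: l} (by simp) hzl
    have hadj : T.Adj e.fst e.snd := e.adj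
    have hv : (e.snd : V) ∉ d :: l := he2
    have hu : (e.fst : V) ∈ d :: l := he1
    clear he1 he2
    generalize (e.fst : V) = u at *
    generalize (e.snd : V) = v at *
    obtain ⟨a, b, hab⟩ := List.append_of_mem hu
    obtain ⟨l', hl'⟩ : ∃ l', a ++ u :: v :: b = d :: l' := by
      cases a with
      | nil => simp at hab; exact ⟨v :: b, by simp [hab.1]⟩
      | cons y a => simp at hab; exact ⟨a ++ u :: v :: b, by simp [hab.1]⟩
    have hperm : (d :: l').Perm (v :: d :: l) := by
      rw [← hl', hab]
      have : a ++ u :: v :: b = (a ++ [u]) ++ v :: b := by simp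
      rw [this]
      refine List.perm_middle.trans ?_
      simp
    have hnF : s(u, v) ∉ F := fun h => hv (hFv _ h v (by simp))
    refine ⟨l', insert s(u, v) F, ?_, ?_, ?_, ?_, Or.inr ?_⟩
    · rw [hperm.nodup_iff]
      exact List.nodup_cons.2 ⟨hv, hnd⟩
    · intro e he
      rcases Finset.mem_insert.1 he with rfl | he
      · exact hadj
      · exact hF e he
    · intro e he x hx
      rw [hperm.mem_iff]
      rcases Finset.mem_insert.1 he with rfl | he
      · rcases Sym2.mem_iff.1 hx with rfl | rfl
        · exact List.mem_cons_of_mem _ hu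
        · simp
      · exact List.mem_cons_of_mem _ (hFv e he x hx)
    · rw [Finset.sum_insert hnF, ← hl']
      rw [hab] at hw
      obtain ⟨x, c, hxc⟩ : ∃ x c, b ++ [d] = x :: c := by
        cases b with
        | nil => exact ⟨d, [], rfl⟩
        | cons y b => exact ⟨y, b ++ [d], rfl⟩
      have h := walkWeight_ins w hsymm htri u v x c a
      rw [← hxc] at h
      simp only [List.append_assoc, List.cons_append] at h hw ⊢
      have : Sym2.lift ⟨w, hsymm⟩ s(u, v) = w u v := rfl
      rw [this]
      linarith
    · have := hperm.length_eq
      simp at this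
      omega

/-- for a tree `T` (a connected acyclic subgraph of the complete
graph on `V` with metric weights) and a vertex `d` of `T`, there is a closed
walk starting and ending at `d` that visits every vertex of `T`, visits every
vertex of `T` other than `d` exactly once, and has weight at most `2 ⋅ w(T)`. -/
theorem stmt5 {V : Type} [Fintype V] [DecidableEq V]
    (w : V → V → ℝ)
    (hzero : ∀ v, w v v = 0)
    (hnonneg : ∀ u v, 0 ≤ w u v)
    (hsymm : ∀ u v, w u v = w v u)
    (htri : ∀ u v x, w u x ≤ w u v + w v x)
    (T : (⊤ : SimpleGraph V).Subgraph)
    (hconn : T.Connected) (hacyc : T.coe.IsAcyclic)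
    (d : V) (hd : d ∈ T.verts) :
    ∃ p : List V,
      p ≠ [] ∧ p.head? = some d ∧ p.getLast? = some d ∧ p.Chain' (· ≠ ·) ∧
      (∀ v ∈ T.verts, v ∈ p) ∧
      (∀ v ∈ T.verts, v ≠ d → p.count v = 1) ∧
      walkWeight w p ≤
        2 * ∑ e ∈ T.edgeSet.toFinite.toFinset, Sym2.lift ⟨w, hsymm⟩ e := by
  obtain ⟨l, F, hnd, hF, hFv, hw, h⟩ :=
    tour_aux w hzero hsymm htri T hconn d hd (Fintype.card V)
  have hall : ∀ v ∈ T.verts, v ∈ d :: l := by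
    rcases h with h | h
    · exact h
    · have := hnd.length_le_card
      simp at this
      omega
  have hnn : ∀ e, 0 ≤ Sym2.lift ⟨w, hsymm⟩ e := by
    intro e
    induction e with
    | _ a b => exact hnonneg a b
  have hsum : ∑ e ∈ F, Sym2.lift ⟨w, hsymm⟩ e ≤
      ∑ e ∈ T.edgeSet.toFinite.toFinset, Sym2.lift ⟨w, hsymm⟩ e := by
    apply Finset.sum_le_sum_of_subset_of_nonneg
    · intro e he
      simpa using hF e he
    · intro e _ _
      exact hnn e
  rcases List.eq_nil_or_concat l with rfl | ⟨l', b, rfl⟩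
  · refine ⟨[d], by simp, by simp, by simp, List.isChain_singleton _, hall, ?_, ?_⟩
    · intro v hv hvd
      have := hall v hv
      simp at this
      exact absurd this hvd
    · have : walkWeight w [d] = 0 := by simp [walkWeight]
      rw [this]
      have := Finset.sum_nonneg (s := T.edgeSet.toFinite.toFinset) (fun e _ => hnn e)
      linarith
  · rw [List.concat_eq_append] at *
    refine ⟨d :: (l' ++ [b]) ++ [d], by simp, by simp, List.getLast?_concat .., ?_, ?_, ?_, ?_⟩
    · apply List.IsChain.append
      · exact List.Pairwise.isChain hnd
      · simp
      · intro x hx y hy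
        rw [← List.cons_append] at hx
        simp only [List.getLast?_concat, List.head?_cons, Option.mem_def, Option.some.injEq] at hx hy
        subst hx hy
        simp at hnd
        grind
    · intro v hv
      exact List.mem_append_left _ (by simpa using hall v hv)
    · intro v hv hvd
      rw [List.count_append, List.count_eq_one_of_mem (by simpa using hnd) (by simpa using hall v hv)]
      simp [Ne.symm hvd]
    · linarith
end

section
/- Let λ and λ* be nonnegative reals. Suppose F is a forest in the complete graph G on V whose vertex set covers V, consisting of at most k trees, such that every tree of F contains at least one depot of D and has weight at most 2λ + λ*/2. Then there exists a rooted tour cover with at most k tours whose maximum tour weight is at most 4λ + λ*. -/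
/-- `p` is a closed walk (in the complete graph) starting and ending at `d`. -/
def IsClosedWalkAt {V : Type} (p : List V) (d : V) : Prop :=
  p ≠ [] ∧ p.head? = some d ∧ p.getLast? = some d ∧ p.Chain' (· ≠ ·)

/-- The total edge weight of a subgraph of the complete graph on `V`. -/
noncomputable def subWeight {V : Type} [Fintype V] (wE : Sym2 V → ℝ)
    (H : (⊤ : SimpleGraph V).Subgraph) : ℝ :=
  ∑ e ∈ H.edgeSet.toFinite.toFinset, wE e

theorem ww_cons {V : Type} (w : V → V → ℝ) (x y : V) (l : List V) :
    walkWeight w (x :: y :: l) = w x y + walkWeight w (y :: l) := by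
  simp [walkWeight]

theorem ww_insert {V : Type} (w : V → V → ℝ) (u v : V) (b : List V) : ∀ a : List V,
    walkWeight w (a ++ u :: v :: u :: b) = walkWeight w (a ++ u :: b) + (w u v + w v u)
  | [] => by
    simp only [List.nil_append, ww_cons]; ring
  | [x] => by
    simp only [List.nil_append, List.cons_append, ww_cons]; ring
  | x :: y :: a => by
    have := ww_insert w u v b (y :: a)
    simp only [List.cons_append, ww_cons] at this ⊢
    rw [this]; ring

theorem closed_insert {V : Type} (d u v : V) (huv : u ≠ v) (a b : List V)
    (h : IsClosedWalkAt (a ++ u :: b) d) : IsClosedWalkAt (a ++ u :: v :: u :: b) d := by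
  obtain ⟨_, h1, h2, h3⟩ := h
  refine ⟨by simp, ?_, ?_, ?_⟩
  · cases a <;> simpa using h1
  · simpa [List.getLast?_append, List.getLast?_cons_cons] using h2
  · change List.IsChain _ _ at h3
    change List.IsChain _ _
    rw [List.isChain_split] at h3 ⊢
    refine ⟨h3.1, ?_⟩
    rw [List.isChain_cons_cons, List.isChain_cons_cons]
    exact ⟨huv, huv.symm, h3.2⟩

theorem exists_tour {V : Type} [Fintype V] [DecidableEq V]
    (w : V → V → ℝ) (hnonneg : ∀ u v, 0 ≤ w u v) (hsymm : ∀ u v, w u v = w v u)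
    (H : (⊤ : SimpleGraph V).Subgraph) (hconn : H.Connected) (d : V) (hd : d ∈ H.verts) :
    ∃ p : List V, IsClosedWalkAt p d ∧ (∀ v ∈ H.verts, v ∈ p) ∧
      walkWeight w p ≤ 2 * subWeight (Sym2.lift ⟨w, hsymm⟩) H := by
  have key : ∀ n : ℕ, ∃ p : List V, ∃ E : Finset (Sym2 V), IsClosedWalkAt p d ∧
      (∀ e ∈ E, e ∈ H.edgeSet) ∧ (∀ e ∈ E, ∀ x ∈ e, x ∈ p) ∧
      walkWeight w p ≤ 2 * ∑ e ∈ E, Sym2.lift ⟨w, hsymm⟩ e ∧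
      ((∀ v ∈ H.verts, v ∈ p) ∨ n ≤ p.toFinset.card) := by
    intro n
    induction n with
    | zero =>
      refine ⟨[d], ∅, ⟨by simp, by simp, by simp, List.isChain_singleton _⟩, by simp, by simp, by simp [walkWeight], Or.inr (by simp)⟩
    | succ n ih =>
      obtain ⟨p, E, hp, hE, hEp, hw, hc⟩ := ih
      by_cases hall : ∀ v ∈ H.verts, v ∈ p
      · exact ⟨p, E, hp, hE, hEp, hw, Or.inl hall⟩
      have hc := hc.resolve_left hall
      push Not at hall
      obtain ⟨x, hx, hxp⟩ := hall
      have hdp : d ∈ p := List.mem_of_mem_head? hp.2.1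
      obtain ⟨W⟩ := hconn.coe.preconnected ⟨d, hd⟩ ⟨x, hx⟩
      obtain ⟨⟨⟨u, v⟩, huv⟩, -, hu, hv⟩ :=
        W.exists_boundary_dart {z | (z : V) ∈ p} hdp hxp
      obtain ⟨u, hu'⟩ := u
      obtain ⟨v, hv'⟩ := v
      simp only [Set.mem_ofPred_eq] at hu hv
      have hadj : H.Adj u v := by simpa using huv
      have hne : u ≠ v := fun h => hv (h ▸ hu)
      obtain ⟨a, b, rfl⟩ := List.append_of_mem hu
      have hnot : s(u, v) ∉ E := fun h => hv (hEp _ h v (by simp))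
      refine ⟨a ++ u :: v :: u :: b, insert s(u, v) E, closed_insert d u v hne a b hp, ?_, ?_, ?_,
        Or.inr ?_⟩
      · intro e he
        rcases Finset.mem_insert.1 he with rfl | he
        · exact hadj
        · exact hE e he
      · intro e he y hy
        rcases Finset.mem_insert.1 he with rfl | he
        · rcases Sym2.mem_iff.1 hy with rfl | rfl <;> simp
        · have := hEp e he y hy
          simp only [List.mem_append, List.mem_cons] at this ⊢
          tauto
      · rw [ww_insert, Finset.sum_insert hnot, Sym2.lift_mk]
        have := hsymm u v
        simp only
        linarith
      · have : (a ++ u :: v :: u :: b).toFinset = insert v (a ++ u :: b).toFinset := by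
          ext y; simp only [List.mem_toFinset, Finset.mem_insert, List.mem_append, List.mem_cons]; tauto
        rw [this, Finset.card_insert_of_notMem (fun h => hv (List.mem_toFinset.1 h))]
        omega
  obtain ⟨p, E, hp, hE, -, hw, hc⟩ := key (Fintype.card V + 1)
  refine ⟨p, hp, hc.resolve_right ?_, hw.trans ?_⟩
  · have := Finset.card_le_univ p.toFinset
    omega
  · unfold subWeight
    have : ∑ e ∈ E, Sym2.lift ⟨w, hsymm⟩ e ≤
        ∑ e ∈ H.edgeSet.toFinite.toFinset, Sym2.lift ⟨w, hsymm⟩ e := by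
      apply Finset.sum_le_sum_of_subset_of_nonneg
      · intro e he; simpa using hE e he
      · intro e _ _
        induction e with
        | _ x y => exact hnonneg x y
    linarith

/-- if `F` is a forest (given by its at most `k` pairwise
vertex-disjoint trees) covering `V`, each tree containing a depot of `D` and of
weight at most `2λ + λ*/2`, then there is a rooted tour cover with at most `k`
tours whose maximum tour weight is at most `4λ + λ*`. -/
theorem stmt6 {V : Type} [Fintype V] [DecidableEq V]
    (w : V → V → ℝ)
    (hzero : ∀ v, w v v = 0)
    (hnonneg : ∀ u v, 0 ≤ w u v)
    (hsymm : ∀ u v, w u v = w v u)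
    (htri : ∀ u v x, w u x ≤ w u v + w v x)
    (D : Finset V) (hD : D.Nonempty)
    (lam lamstar : ℝ) (hlam : 0 ≤ lam) (hlamstar : 0 ≤ lamstar)
    (k : ℕ) (q : ℕ) (hq : q ≤ k)
    (T : Fin q → (⊤ : SimpleGraph V).Subgraph)
    (hconn : ∀ i, (T i).Connected)
    (hacyc : ∀ i, (T i).coe.IsAcyclic)
    (hdisj : ∀ i j, i ≠ j → Disjoint (T i).verts (T j).verts)
    (hcov : ∀ v : V, ∃ i, v ∈ (T i).verts)
    (hdep : ∀ i, ∃ d ∈ D, d ∈ (T i).verts)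
    (hwt : ∀ i, subWeight (Sym2.lift ⟨w, hsymm⟩) (T i) ≤ 2 * lam + lamstar / 2) :
    ∃ (q' : ℕ) (_ : q' ≤ k) (tours : Fin q' → List V),
      (∀ i, ∃ d ∈ D, IsClosedWalkAt (tours i) d) ∧
      (∀ v : V, ∃ i, v ∈ tours i) ∧
      (∀ i, walkWeight w (tours i) ≤ 4 * lam + lamstar) := by
  choose d hdD hdT using hdep
  choose p hp hcv hpw using fun i => exists_tour w hnonneg hsymm (T i) (hconn i) (d i) (hdT i)
  refine ⟨q, hq, p, fun i => ⟨d i, hdD i, hp i⟩, fun v => ?_, fun i => ?_⟩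
  · obtain ⟨i, hi⟩ := hcov v
    exact ⟨i, hcv i v hi⟩
  · have := hpw i
    have := hwt i
    linarith
end

section
/- Let {C_1, …, C_q} be a feasible rooted cycle cover of V, i.e., a family of pairwise edge-disjoint cycles of G, each containing exactly one depot of D, whose vertex sets together cover V. Then there exists a rooted spanning forest F of (V, D) with w(F) ≤ Σ_{j=1}^{q} ( w(C_j) − max_{e ∈ E(C_j)} w(e) ). In particular, any minimum-weight rooted spanning forest F* satisfies w(F*) ≤ Σ_{j=1}^{q} ( w(C_j) − max_{e ∈ E(C_j)} w(e) ). -/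
/-- The maximum edge weight of a cycle (0 for the empty list; for a nonempty
cycle with nonnegative weights this is the maximum weight of its edges). -/
def maxEdgeWeight {V : Type} (w : V → V → ℝ) (l : List V) : ℝ :=
  (((l.zip (l.rotate 1)).map fun p => w p.1 p.2).foldr max 0)

/-- The total edge weight of a simple graph on the finite vertex type `V`. -/
noncomputable def graphWeight {V : Type} [Fintype V] (wE : Sym2 V → ℝ)
    (F : SimpleGraph V) : ℝ :=
  ∑ e ∈ F.edgeSet.toFinite.toFinset, wE e

/-- `F` is a rooted spanning forest of `(V, D)`: an acyclic (simple sub)graph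
of the complete graph on `V` each of whose connected components contains
exactly one depot of `D`. -/
def IsRSF {V : Type} (D : Finset V) (F : SimpleGraph V) : Prop :=
  F.IsAcyclic ∧
    ∀ c : F.ConnectedComponent, ∃! d : V, d ∈ D ∧ F.connectedComponentMk d = c

def HitsD {V : Type} (D : Finset V) (F : SimpleGraph V) : Prop :=
  ∀ v, ∃ d ∈ D, F.Reachable v d

theorem hits_delete {V : Type} (D : Finset V) (F : SimpleGraph V) (hF : HitsD D F) (x y : V)
    (hx : ∃ d ∈ D, (F.deleteEdges {s(x,y)}).Reachable x d)
    (hy : ∃ d ∈ D, (F.deleteEdges {s(x,y)}).Reachable y d) :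
    HitsD D (F.deleteEdges {s(x,y)}) := by
  intro v
  obtain ⟨d, hd, ⟨p⟩⟩ := hF v
  induction p with
  | nil => exact ⟨_, hd, SimpleGraph.Reachable.refl _⟩
  | @cons a b c h p ih =>
    by_cases he : s(a,b) = s(x,y)
    · rcases Sym2.eq_iff.1 he with ⟨rfl, rfl⟩ | ⟨rfl, rfl⟩
      · exact hx
      · exact hy
    · obtain ⟨d, hd, hr⟩ := ih hd
      refine ⟨d, hd, SimpleGraph.Reachable.trans (SimpleGraph.Adj.reachable ?_) hr⟩
      rw [SimpleGraph.deleteEdges_adj]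
      exact ⟨h, by simpa using he⟩

theorem exists_rsf_le {V : Type} [Fintype V] (D : Finset V) (H : SimpleGraph V)
    (hH : HitsD D H) : ∃ F ≤ H, IsRSF D F := by
  classical
  obtain ⟨F, hle, hmin⟩ := (Set.toFinite {F : SimpleGraph V | HitsD D F}).exists_le_minimal hH
  have key : ∀ x y, F.Adj x y → ¬ HitsD D (F.deleteEdges {s(x,y)}) := by
    intro x y hxy h
    have := hmin.2 h (SimpleGraph.deleteEdges_le _) hxy
    rw [SimpleGraph.deleteEdges_adj] at this
    simp at this
  refine ⟨F, hle, ?_, ?_⟩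
  · rw [SimpleGraph.isAcyclic_iff_forall_adj_isBridge]
    intro x y hxy
    by_contra hb
    apply key x y hxy
    rw [SimpleGraph.isBridge_iff] at hb
    have hr : (F.deleteEdges {s(x,y)}).Reachable x y := by
      by_contra h
      exact hb (by first | exact ⟨hxy, h⟩ | exact h)
    intro v
    obtain ⟨d, hd, ⟨p⟩⟩ := hmin.1 v
    refine ⟨d, hd, ?_⟩
    clear hd
    induction p with
    | nil => exact SimpleGraph.Reachable.refl _
    | @cons a b c h p ih =>
      refine SimpleGraph.Reachable.trans ?_ ih
      by_cases he : s(a,b) = s(x,y)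
      · rcases Sym2.eq_iff.1 he with ⟨rfl, rfl⟩ | ⟨rfl, rfl⟩
        · exact hr
        · exact hr.symm
      · refine SimpleGraph.Adj.reachable ?_
        rw [SimpleGraph.deleteEdges_adj]
        exact ⟨h, by simpa using he⟩
  · intro c
    induction c using SimpleGraph.ConnectedComponent.ind with | _ v => ?_
    obtain ⟨d, hd, hr⟩ := hmin.1 v
    refine ⟨d, ⟨hd, (SimpleGraph.ConnectedComponent.sound hr).symm⟩, ?_⟩
    rintro d' ⟨hd', hr'⟩
    by_contra hne
    have h1 : F.Reachable d' d := (SimpleGraph.ConnectedComponent.exact hr').trans hr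
    obtain ⟨p, hp⟩ := h1.exists_isPath
    cases p with
    | nil => exact hne rfl
    | @cons _ b _ h p =>
      rw [SimpleGraph.Walk.cons_isPath_iff] at hp
      apply key d' b h
      apply hits_delete _ _ hmin.1
      · exact ⟨d', hd', SimpleGraph.Reachable.refl _⟩
      · refine ⟨d, hd, ⟨p.toDeleteEdges _ ?_⟩⟩
        intro e he he'
        rw [Set.mem_singleton_iff] at he'
        subst he'
        exact hp.2 (p.fst_mem_support_of_mem_edges he)

theorem foldr_max_le (L : List ℝ) (hL : L ≠ []) (h0 : ∀ x ∈ L, 0 ≤ x) :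
    L.foldr max 0 ∈ L := by
  induction L with
  | nil => exact absurd rfl hL
  | cons a L ih =>
    by_cases hn : L = []
    · subst hn; simp [h0 a]
    · have := ih hn (fun x hx => h0 x (List.mem_cons_of_mem _ hx))
      simp only [List.foldr_cons]
      rcases max_choice a (L.foldr max 0) with h | h
      · rw [h]; simp
      · rw [h]; exact List.mem_cons_of_mem _ this

theorem cycle_path {V : Type} [DecidableEq V]
    (w : V → V → ℝ) (hnonneg : ∀ u v, 0 ≤ w u v)
    (hsymm : ∀ u v, w u v = w v u) (l : List V) (hl : l ≠ []) :
    ∃ P : Finset (Sym2 V),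
      ∑ e ∈ P, Sym2.lift ⟨w, hsymm⟩ e ≤ cycleWeight w l - maxEdgeWeight w l ∧
      ∀ H : SimpleGraph V, (∀ u v, s(u,v) ∈ P → u ≠ v → H.Adj u v) →
        ∀ u ∈ l, ∀ v ∈ l, H.Reachable u v := by
  have hn : 0 < l.length := List.length_pos_iff.2 hl
  set n := l.length with hnn
  let f : ℕ → V := fun i => l[i % n]'(Nat.mod_lt _ hn)
  let M := (l.zip (l.rotate 1)).map fun p => w p.1 p.2
  have hMlen : M.length = n := by simp [M, hnn]
  have hM : ∀ i (h : i < M.length), M[i] = w (f i) (f (i+1)) := by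
    intro i h
    have hi : i < n := hMlen ▸ h
    simp [M, f, List.getElem_rotate, Nat.mod_eq_of_lt hi, hnn.symm]
  have hM0 : M ≠ [] := by
    intro h; rw [h] at hMlen; simp at hMlen; omega
  have hmem := foldr_max_le M hM0 (by
    intro x hx
    obtain ⟨p, _, rfl⟩ := List.mem_map.1 hx
    exact hnonneg _ _)
  obtain ⟨k, hk, hkeq⟩ := List.getElem_of_mem hmem
  have hk' : k < n := hMlen ▸ hk
  have hmax : maxEdgeWeight w l = w (f k) (f (k+1)) := by
    rw [← hM k hk, hkeq]; rfl
  have hsum : cycleWeight w l = ∑ i ∈ Finset.range n, w (f i) (f (i+1)) := by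
    have : cycleWeight w l = M.sum := rfl
    rw [this, ← Fin.sum_univ_getElem, Finset.sum_range fun i => w (f i) (f (i+1))]
    rw [← Equiv.sum_comp (finCongr hMlen)]
    exact Finset.sum_congr rfl fun i _ => hM i i.2
  refine ⟨((Finset.range n).erase k).image fun i => s(f i, f (i+1)), ?_, ?_⟩
  · have h1 : cycleWeight w l - maxEdgeWeight w l
        = ∑ i ∈ (Finset.range n).erase k, w (f i) (f (i+1)) := by
      rw [hsum, hmax, ← Finset.add_sum_erase _ _ (Finset.mem_range.2 hk')]; ring
    rw [h1]
    refine Finset.sum_image_le_of_nonneg ?_ |>.trans ?_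
    · intro i _
      induction i with | _ a b => exact hnonneg _ _
    · exact le_of_eq (Finset.sum_congr rfl fun i _ => by simp)
  · intro H hH
    have hf : ∀ i, f (i % n) = f i := by intro i; simp [f]
    have hf1 : ∀ i, f (i % n + 1) = f (i + 1) := by intro i; simp [f]
    have step : ∀ i < n, H.Reachable (f (k+1)) (f (k+1+i)) := by
      intro i
      induction i with
      | zero => intro _; exact SimpleGraph.Reachable.refl _
      | succ i ih =>
        intro hi
        refine (ih (by omega)).trans ?_
        by_cases he : f (k+1+i) = f (k+1+(i+1))
        · rw [he]
        · refine (hH _ _ ?_ he).reachable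
          refine Finset.mem_image.2 ⟨(k+1+i) % n, ?_, ?_⟩
          · refine Finset.mem_erase.2 ⟨?_, Finset.mem_range.2 (Nat.mod_lt _ hn)⟩
            by_cases hc : k+1+i < n
            · rw [Nat.mod_eq_of_lt hc]; omega
            · rw [Nat.mod_eq_sub_mod (by omega), Nat.mod_eq_of_lt (by omega)]; omega
          · simp only [hf, hf1]; rfl
    have all : ∀ u ∈ l, H.Reachable (f (k+1)) u := by
      intro u hu
      obtain ⟨j, hj, rfl⟩ := List.getElem_of_mem hu
      have e : l[j] = f j := by simp [f, Nat.mod_eq_of_lt (show j < n from hj)]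
      rw [e]
      by_cases hc : k + 1 ≤ j
      · have := step (j - (k+1)) (by omega)
        rwa [Nat.add_sub_cancel' hc] at this
      · have := step (j + n - (k+1)) (by omega)
        rw [Nat.add_sub_cancel' (by omega)] at this
        rwa [← hf (j+n), Nat.add_mod_right, hf] at this
    intro u hu v hv
    exact (all u hu).symm.trans (all v hv)

/-- given a feasible rooted cycle cover `{C_1, …, C_q}` (pairwise
edge-disjoint cycles, each containing exactly one depot, covering `V`), there
is a rooted spanning forest of weight at most
`Σ_j (w(C_j) − max_{e ∈ E(C_j)} w(e))`; in particular any minimum-weight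
rooted spanning forest satisfies this bound. -/
theorem stmt7 {V : Type} [Fintype V] [DecidableEq V]
    (w : V → V → ℝ)
    (hzero : ∀ v, w v v = 0)
    (hnonneg : ∀ u v, 0 ≤ w u v)
    (hsymm : ∀ u v, w u v = w v u)
    (htri : ∀ u v x, w u x ≤ w u v + w v x)
    (D : Finset V) (hD : D.Nonempty)
    (q : ℕ) (C : Fin q → List V)
    (hnodup : ∀ j, (C j).Nodup) (hne : ∀ j, C j ≠ [])
    (hdisj : ∀ i j, i ≠ j →
      Disjoint (cycleEdges (C i)).toFinset (cycleEdges (C j)).toFinset)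
    (hdep : ∀ j, ((C j).toFinset ∩ D).card = 1)
    (hcov : ∀ v : V, ∃ j, v ∈ C j) :
    (∃ F : SimpleGraph V, IsRSF D F ∧
        graphWeight (Sym2.lift ⟨w, hsymm⟩) F ≤
          ∑ j, (cycleWeight w (C j) - maxEdgeWeight w (C j))) ∧
    (∀ F : SimpleGraph V, IsRSF D F →
      (∀ F' : SimpleGraph V, IsRSF D F' →
        graphWeight (Sym2.lift ⟨w, hsymm⟩) F ≤
          graphWeight (Sym2.lift ⟨w, hsymm⟩) F') →
      graphWeight (Sym2.lift ⟨w, hsymm⟩) F ≤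
        ∑ j, (cycleWeight w (C j) - maxEdgeWeight w (C j))) := by
  rw [and_iff_left_of_imp]
  rotate_left
  · intro h F _ hmin
    obtain ⟨F', h1, h2⟩ := h
    exact (hmin F' h1).trans h2
  choose P hP hconn using fun j => cycle_path w hnonneg hsymm (C j) (hne j)
  let H : SimpleGraph V := SimpleGraph.fromEdgeSet (⋃ j, (P j : Set (Sym2 V)))
  have hH : HitsD D H := by
    intro v
    obtain ⟨j, hj⟩ := hcov v
    obtain ⟨d, hd⟩ := Finset.card_eq_one.1 (hdep j)
    have hd' : d ∈ (C j).toFinset ∩ D := by rw [hd]; simp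
    rw [Finset.mem_inter, List.mem_toFinset] at hd'
    refine ⟨d, hd'.2, hconn j H ?_ v hj d hd'.1⟩
    intro a b hab hne
    rw [SimpleGraph.fromEdgeSet_adj]
    exact ⟨Set.mem_iUnion.2 ⟨j, hab⟩, hne⟩
  obtain ⟨F, hle, hF⟩ := exists_rsf_le D H hH
  refine ⟨F, hF, ?_⟩
  have hw0 : ∀ e : Sym2 V, 0 ≤ Sym2.lift ⟨w, hsymm⟩ e := by
    intro e
    induction e with | _ a b => exact hnonneg _ _
  calc graphWeight (Sym2.lift ⟨w, hsymm⟩) F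
      ≤ ∑ e ∈ Finset.univ.biUnion P, Sym2.lift ⟨w, hsymm⟩ e := by
        refine Finset.sum_le_sum_of_subset_of_nonneg ?_ fun e _ _ => hw0 e
        intro e he
        rw [Set.Finite.mem_toFinset] at he
        have := SimpleGraph.edgeSet_mono hle he
        rw [SimpleGraph.edgeSet_fromEdgeSet] at this
        simpa using this.1
    _ ≤ ∑ j, ∑ e ∈ P j, Sym2.lift ⟨w, hsymm⟩ e :=
by
        have hb : Finset.univ.biUnion P = (Finset.univ.sigma P).image Sigma.snd := by
          ext e; simp
        rw [hb, Finset.sum_sigma']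
        exact Finset.sum_image_le_of_nonneg (fun e _ => hw0 e)
    _ ≤ _ := Finset.sum_le_sum fun j _ => hP j
end

section
/- Suppose there exists a family of cycles of G, each containing exactly one depot of D, whose vertex sets together cover V and whose maximum cycle weight is λ*. Then every edge e of any minimum-weight rooted spanning forest F* of (V, D) satisfies w(e) ≤ λ*. -/
theorem reach_induct {V : Type} {G : SimpleGraph V} (P : V → Prop)
    (h : ∀ u v, G.Adj u v → P u → P v) {u v : V} (r : G.Reachable u v) (hu : P u) : P v := by
  obtain ⟨p⟩ := r
  induction p with
  | nil => exact hu
  | cons hadj _ ih => exact ih (h _ _ hadj hu)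

theorem cycle_cross {V : Type} (w : V → V → ℝ) (hnonneg : ∀ u v, 0 ≤ w u v) (l : List V)
    (S : V → Prop) (b d : V) (hb : b ∈ l) (hd : d ∈ l) (hbS : S b) (hdS : ¬ S d) :
    ∃ x y, S x ∧ ¬ S y ∧ w x y ≤ cycleWeight w l := by
  have key : ∃ p ∈ l.zip (l.rotate 1), S p.1 ∧ ¬ S p.2 := by
    by_contra hcon
    push Not at hcon
    obtain ⟨i, hi, rfl⟩ := List.getElem_of_mem hb
    obtain ⟨j, hj, rfl⟩ := List.getElem_of_mem hd
    have hn : 0 < l.length := by omega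
    have step : ∀ k (hk : k < l.length), S l[k] →
        S (l[(k+1) % l.length]'(Nat.mod_lt _ hn)) := by
      intro k hk hS
      have hk' : k < (l.zip (l.rotate 1)).length := by simpa using hk
      have := hcon _ (List.getElem_mem hk')
      rw [List.getElem_zip] at this
      have := this hS
      simpa [List.getElem_rotate] using this
    have all : ∀ k, S (l[(i+k) % l.length]'(Nat.mod_lt _ hn)) := by
      intro k
      induction k with
      | zero => simpa [Nat.mod_eq_of_lt hi] using hbS
      | succ k ih =>
        have := step _ (Nat.mod_lt _ hn) ih
        simpa [Nat.mod_add_mod, Nat.add_assoc] using this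
    have := all (l.length - i + j)
    have e : (i + (l.length - i + j)) % l.length = j := by
      have : i + (l.length - i + j) = j + l.length := by omega
      rw [this, Nat.add_mod_right, Nat.mod_eq_of_lt hj]
    simp only [e] at this
    exact hdS this
  obtain ⟨p, hp, h1, h2⟩ := key
  refine ⟨p.1, p.2, h1, h2, ?_⟩
  unfold cycleWeight
  refine List.single_le_sum ?_ _ (List.mem_map.2 ⟨p, hp, rfl⟩)
  intro z hz
  obtain ⟨p, _, rfl⟩ := List.mem_map.1 hz
  exact hnonneg _ _

theorem main_aux {V : Type} [Fintype V] [DecidableEq V]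
    (w : V → V → ℝ)
    (hnonneg : ∀ u v, 0 ≤ w u v)
    (hsymm : ∀ u v, w u v = w v u)
    (D : Finset V)
    (lamstar : ℝ)
    (q : ℕ) (C : Fin q → List V)
    (hdep : ∀ j, ((C j).toFinset ∩ D).card = 1)
    (hcov : ∀ v : V, ∃ j, v ∈ C j)
    (hwt : ∀ j, cycleWeight w (C j) ≤ lamstar)
    (F : SimpleGraph V) (hF : IsRSF D F)
    (hmin : ∀ F' : SimpleGraph V, IsRSF D F' →
      graphWeight (Sym2.lift ⟨w, hsymm⟩) F ≤
        graphWeight (Sym2.lift ⟨w, hsymm⟩) F')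
    (a b d : V) (hab : F.Adj a b) (hd : d ∈ D)
    (hda : (F.deleteEdges {s(a, b)}).Reachable d a) : w a b ≤ lamstar := by
  set G0 := F.deleteEdges {s(a, b)} with hG0
  have hle : G0 ≤ F := SimpleGraph.deleteEdges_le _
  have hbr : ¬ G0.Reachable a b :=
    SimpleGraph.isBridge_iff.1 (SimpleGraph.isAcyclic_iff_forall_adj_isBridge.1 hF.1 hab)
  have huniq : ∀ d1 ∈ D, ∀ d2 ∈ D, F.Reachable d1 d2 → d1 = d2 := by
    intro d1 h1 d2 h2 hr
    exact (hF.2 (F.connectedComponentMk d2)).unique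
      ⟨h1, SimpleGraph.ConnectedComponent.eq.2 hr⟩ ⟨h2, rfl⟩
  have hexF : ∀ v, ∃ d' ∈ D, F.Reachable d' v := by
    intro v
    obtain ⟨d', ⟨h1, h2⟩, _⟩ := hF.2 (F.connectedComponentMk v)
    exact ⟨d', h1, SimpleGraph.ConnectedComponent.eq.1 h2⟩
  have hDS : ∀ d' ∈ D, ¬ G0.Reachable b d' := by
    intro d' h1 h2
    have : d' = d := huniq _ h1 _ hd
      ((h2.mono hle).symm.trans (hab.reachable.symm.trans (hda.mono hle).symm))
    subst this
    exact hbr (h2.trans hda).symm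
  have hadj : ∀ u v, F.Adj u v → G0.Adj u v ∨ (u = a ∧ v = b) ∨ (u = b ∧ v = a) := by
    intro u v h
    by_cases he : s(u, v) = s(a, b)
    · right; simpa using he
    · left; simp [hG0, SimpleGraph.deleteEdges_adj, h]; simpa using he
  have hex : ∀ v, G0.Reachable b v ∨ ∃ d' ∈ D, G0.Reachable d' v := by
    intro v
    obtain ⟨d', hd', hr⟩ := hexF v
    refine reach_induct (fun v => G0.Reachable b v ∨ ∃ d' ∈ D, G0.Reachable d' v) ?_ hr
      (Or.inr ⟨d', hd', SimpleGraph.Reachable.refl _⟩)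
    intro u v huv hu
    rcases hadj u v huv with h | ⟨rfl, rfl⟩ | ⟨rfl, rfl⟩
    · rcases hu with hu | ⟨d'', h1, h2⟩
      · exact Or.inl (hu.trans h.reachable)
      · exact Or.inr ⟨d'', h1, h2.trans h.reachable⟩
    · exact Or.inl (SimpleGraph.Reachable.refl _)
    · exact Or.inr ⟨d, hd, hda⟩
  obtain ⟨j, hj⟩ := hcov b
  obtain ⟨dj, hdj⟩ := Finset.card_pos.1 (by rw [hdep j]; exact one_pos)
  rw [Finset.mem_inter, List.mem_toFinset] at hdj
  obtain ⟨x, y, hx, hy, hw⟩ := cycle_cross w hnonneg (C j) (fun v => G0.Reachable b v) b dj hj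
    hdj.1 (SimpleGraph.Reachable.refl _) (hDS _ hdj.2)
  have hxy : ¬ G0.Reachable x y := fun h => hy (hx.trans h)
  have hxyne : x ≠ y := by rintro rfl; exact hxy (SimpleGraph.Reachable.refl _)
  obtain ⟨dy, hdy, hdyr⟩ := (hex y).resolve_left hy
  have hle' : G0 ≤ G0 ⊔ SimpleGraph.edge x y := le_sup_left
  have hRSF : IsRSF D (G0 ⊔ SimpleGraph.edge x y) := by
    refine ⟨.sup_edge_of_not_reachable hxy (hF.1.anti hle), ?_⟩
    intro c
    induction c using SimpleGraph.ConnectedComponent.ind with | _ v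
    refine existsUnique_of_exists_of_unique ?_ ?_
    · rcases hex v with h | ⟨d', h1, h2⟩
      · refine ⟨dy, hdy, SimpleGraph.ConnectedComponent.eq.2 ?_⟩
        have : (G0 ⊔ SimpleGraph.edge x y).Adj y x := by
          simp [SimpleGraph.edge_adj, hxyne.symm]
        exact (hdyr.mono hle').trans (this.reachable.trans ((hx.symm.trans h).mono hle'))
      · exact ⟨d', h1, SimpleGraph.ConnectedComponent.eq.2 (h2.mono hle')⟩
    · rintro d1 d2 ⟨h1, h1'⟩ ⟨h2, h2'⟩
      have hr := SimpleGraph.ConnectedComponent.eq.1 (h1'.trans h2'.symm)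
      have := reach_induct (fun u => (G0.Reachable b u → G0.Reachable d1 y) ∧
        (¬ G0.Reachable b u → G0.Reachable d1 u)) ?_ hr
        ⟨fun h => absurd h (hDS _ h1), fun _ => SimpleGraph.Reachable.refl _⟩
      · exact huniq _ h1 _ h2 ((this.2 (hDS _ h2)).mono hle)
      · rintro u v huv ⟨hu1, hu2⟩
        rw [SimpleGraph.sup_adj, SimpleGraph.edge_adj] at huv
        rcases huv with h | ⟨⟨rfl, rfl⟩ | ⟨rfl, rfl⟩, _⟩
        · exact ⟨fun hv => hu1 (hv.trans h.reachable.symm),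
            fun hv => (hu2 (fun hu => hv (hu.trans h.reachable))).trans h.reachable⟩
        · exact ⟨fun hv => absurd hv hy, fun _ => hu1 hx⟩
        · exact ⟨fun _ => hu2 hy, fun hv => absurd hx hv⟩
  have hm := hmin _ hRSF
  have e1 : graphWeight (Sym2.lift ⟨w, hsymm⟩) F
      = w a b + graphWeight (Sym2.lift ⟨w, hsymm⟩) G0 := by
    unfold graphWeight
    have : F.edgeSet.toFinite.toFinset = insert s(a, b) G0.edgeSet.toFinite.toFinset := by
      ext e
      simp only [Set.Finite.mem_toFinset, Finset.mem_insert, hG0, SimpleGraph.edgeSet_deleteEdges,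
        Set.mem_diff, Set.mem_singleton_iff]
      by_cases he : e = s(a, b)
      · subst he; simpa using hab
      · simp [he]
    rw [this, Finset.sum_insert (by simp [hG0])]
    simp
  have e2 : graphWeight (Sym2.lift ⟨w, hsymm⟩) (G0 ⊔ SimpleGraph.edge x y)
      = w x y + graphWeight (Sym2.lift ⟨w, hsymm⟩) G0 := by
    unfold graphWeight
    have : (G0 ⊔ SimpleGraph.edge x y).edgeSet.toFinite.toFinset
        = insert s(x, y) G0.edgeSet.toFinite.toFinset := by
      ext e
      simp only [Set.Finite.mem_toFinset, Finset.mem_insert, SimpleGraph.edgeSet_sup,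
        SimpleGraph.edgeSet_edge_of_ne hxyne, Set.mem_union, Set.mem_singleton_iff]
      tauto
    rw [this, Finset.sum_insert]
    · simp
    · rw [Set.Finite.mem_toFinset, SimpleGraph.mem_edgeSet]
      exact fun h => hxy h.reachable
  have := hwt j
  linarith

/-- if there is a family of cycles, each containing exactly one
depot of `D`, covering `V`, with maximum cycle weight `λ*`, then every edge of
any minimum-weight rooted spanning forest of `(V, D)` has weight at most
`λ*`. -/
theorem stmt8 {V : Type} [Fintype V] [DecidableEq V]
    (w : V → V → ℝ)
    (hzero : ∀ v, w v v = 0)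
    (hnonneg : ∀ u v, 0 ≤ w u v)
    (hsymm : ∀ u v, w u v = w v u)
    (htri : ∀ u v x, w u x ≤ w u v + w v x)
    (D : Finset V) (hD : D.Nonempty)
    (lamstar : ℝ)
    (q : ℕ) (C : Fin q → List V)
    (hnodup : ∀ j, (C j).Nodup) (hne : ∀ j, C j ≠ [])
    (hdep : ∀ j, ((C j).toFinset ∩ D).card = 1)
    (hcov : ∀ v : V, ∃ j, v ∈ C j)
    (hwt : ∀ j, cycleWeight w (C j) ≤ lamstar)
    (F : SimpleGraph V) (hF : IsRSF D F)
    (hmin : ∀ F' : SimpleGraph V, IsRSF D F' →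
      graphWeight (Sym2.lift ⟨w, hsymm⟩) F ≤
        graphWeight (Sym2.lift ⟨w, hsymm⟩) F') :
    ∀ e ∈ F.edgeSet, Sym2.lift ⟨w, hsymm⟩ e ≤ lamstar := by
  intro e
  induction e using Sym2.ind with | _ a b
  intro hab
  rw [SimpleGraph.mem_edgeSet] at hab
  simp only [Sym2.lift_mk]
  obtain ⟨d, ⟨hd, hr⟩, _⟩ := hF.2 (F.connectedComponentMk a)
  have hr := SimpleGraph.ConnectedComponent.eq.1 hr
  have key : (F.deleteEdges {s(a, b)}).Reachable d a ∨ (F.deleteEdges {s(a, b)}).Reachable d b := by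
    have := reach_induct (fun v => (F.deleteEdges {s(a, b)}).Reachable d v ∨
      (F.deleteEdges {s(a, b)}).Reachable d a ∨ (F.deleteEdges {s(a, b)}).Reachable d b) ?_ hr
      (Or.inl (SimpleGraph.Reachable.refl _))
    · tauto
    · rintro u v huv (h | h)
      · by_cases he : s(u, v) = s(a, b)
        · have he' : (u = a ∧ v = b) ∨ (u = b ∧ v = a) := by simpa using he
          rcases he' with ⟨rfl, rfl⟩ | ⟨rfl, rfl⟩
          · exact Or.inr (Or.inl h)
          · exact Or.inr (Or.inr h)
        · have : (F.deleteEdges {s(a, b)}).Adj u v := by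
            rw [SimpleGraph.deleteEdges_adj]; exact ⟨huv, he⟩
          exact Or.inl (h.trans this.reachable)
      · exact Or.inr h
  rcases key with h | h
  · exact main_aux w hnonneg hsymm D lamstar q C hdep hcov hwt F hF hmin a b d hab hd h
  · rw [hsymm]
    rw [Sym2.eq_swap] at h
    exact main_aux w hnonneg hsymm D lamstar q C hdep hcov hwt F hF hmin b a d hab.symm hd h
end

section
/- Let G' be the complete graph on vertex set V' = (V \ D) ∪ {d̂}, where d̂ is a new vertex, with edge weights w'(u, v) = w(u, v) for u, v ∈ V \ D and w'(d̂, v) = min_{d ∈ D} w(d, v) for v ∈ V \ D. Then the minimum total edge weight of a rooted spanning forest of (V, D) equals the minimum total edge weight of a spanning tree of G'. -/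
/-- Every vertex is connected to a depot. -/
def Cov {V : Type} (D : Finset V) (F : SimpleGraph V) : Prop :=
  ∀ v, ∃ d ∈ D, F.Reachable v d

theorem weight_le {A B : Type} [Fintype A] [Fintype B] [Nonempty A] (wA : Sym2 A → ℝ) (wB : Sym2 B → ℝ)
    (G : SimpleGraph A) (H : SimpleGraph B) (R : Sym2 B → Sym2 A → Prop)
    (h1 : ∀ e ∈ H.edgeSet, ∃ e' ∈ G.edgeSet, R e e')
    (h2 : ∀ e₁ ∈ H.edgeSet, ∀ e₂ ∈ H.edgeSet, ∀ e', R e₁ e' → R e₂ e' → e₁ = e₂)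
    (h3 : ∀ e ∈ H.edgeSet, ∀ e' ∈ G.edgeSet, R e e' → wB e ≤ wA e')
    (h4 : ∀ e' ∈ G.edgeSet, 0 ≤ wA e') :
    graphWeight wB H ≤ graphWeight wA G := by
  classical
  unfold graphWeight
  have : Nonempty (Sym2 A) := ⟨s(Classical.arbitrary A, Classical.arbitrary A)⟩
  choose! s hs hR using h1
  calc _ ≤ ∑ e ∈ H.edgeSet.toFinite.toFinset, wA (s e) := by
        apply Finset.sum_le_sum
        intro e he
        simp only [Set.Finite.mem_toFinset] at he
        exact h3 e he _ (hs e he) (hR e he)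
    _ = ∑ e' ∈ H.edgeSet.toFinite.toFinset.image s, wA e' := by
        rw [Finset.sum_image]
        intro a ha b hb hab
        simp only [Set.Finite.coe_toFinset] at ha hb
        exact h2 a ha b hb (s a) (hR a ha) (hab ▸ hR b hb)
    _ ≤ _ := by
        apply Finset.sum_le_sum_of_subset_of_nonneg
        · intro x hx
          simp only [Finset.mem_image, Set.Finite.mem_toFinset] at hx ⊢
          obtain ⟨e, he, rfl⟩ := hx
          exact hs e he
        · intro e he _
          simp only [Set.Finite.mem_toFinset] at he
          exact h4 e he

theorem reach_del {V : Type} (F : SimpleGraph V) (a b : V) {x y : V} (p : F.Walk x y) :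
    (F.deleteEdges {s(a, b)}).Reachable x y ∨ (F.deleteEdges {s(a, b)}).Reachable x a ∨
      (F.deleteEdges {s(a, b)}).Reachable x b := by
  induction p with
  | nil => exact Or.inl (SimpleGraph.Reachable.refl _)
  | @cons u v w h p ih =>
    by_cases he : s(u, v) = s(a, b)
    · rcases Sym2.eq_iff.1 he with ⟨rfl, rfl⟩ | ⟨rfl, rfl⟩
      · exact Or.inr (Or.inl (SimpleGraph.Reachable.refl _))
      · exact Or.inr (Or.inr (SimpleGraph.Reachable.refl _))
    · have h' : (F.deleteEdges {s(a, b)}).Reachable u v := by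
        apply SimpleGraph.Adj.reachable
        rw [SimpleGraph.deleteEdges_adj]
        exact ⟨h, he⟩
      rcases ih with ih | ih | ih
      · exact Or.inl (h'.trans ih)
      · exact Or.inr (Or.inl (h'.trans ih))
      · exact Or.inr (Or.inr (h'.trans ih))

/-- If both ends of an edge still reach depots after deletion, covering is preserved. -/
theorem cov_del {V : Type} (D : Finset V) (F : SimpleGraph V) (hF : Cov D F) (a b : V)
    (ha : ∃ d ∈ D, (F.deleteEdges {s(a, b)}).Reachable a d)
    (hb : ∃ d ∈ D, (F.deleteEdges {s(a, b)}).Reachable b d) :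
    Cov D (F.deleteEdges {s(a, b)}) := by
  intro v
  obtain ⟨d, hd, ⟨p⟩⟩ := hF v
  rcases reach_del F a b p with h | h | h
  · exact ⟨d, hd, h⟩
  · obtain ⟨d', hd', h'⟩ := ha
    exact ⟨d', hd', h.trans h'⟩
  · obtain ⟨d', hd', h'⟩ := hb
    exact ⟨d', hd', h.trans h'⟩

theorem exists_rsf {V : Type} [Fintype V] (D : Finset V) (F₀ : SimpleGraph V)
    (h₀ : Cov D F₀) : ∃ F ≤ F₀, IsRSF D F := by
  classical
  obtain ⟨F, hle, hF⟩ := exists_minimal_le_of_wellFoundedLT (Cov D) F₀ h₀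
  have key : ∀ a b, F.Adj a b → ¬ Cov D (F.deleteEdges {s(a, b)}) := by
    intro a b hab hc
    have := hF.2 hc (SimpleGraph.deleteEdges_le _) hab
    rw [SimpleGraph.deleteEdges_adj] at this
    exact this.2 rfl
  refine ⟨F, hle, ?_, ?_⟩
  · rw [SimpleGraph.isAcyclic_iff_forall_adj_isBridge]
    intro a b hab
    rw [SimpleGraph.isBridge_iff]
    intro hr
    apply key a b hab
    obtain ⟨d, hd, ⟨p⟩⟩ := hF.1 a
    have : ∃ d ∈ D, (F.deleteEdges {s(a, b)}).Reachable a d := by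
      rcases reach_del F a b p.reverse with h | h | h
      · exact ⟨d, hd, h.symm⟩
      · exact ⟨d, hd, h.symm⟩
      · exact ⟨d, hd, hr.trans h.symm⟩
    obtain ⟨d, hd, h⟩ := this
    exact cov_del D F hF.1 a b ⟨d, hd, h⟩ ⟨d, hd, hr.symm.trans h⟩
  · intro c
    induction c using SimpleGraph.ConnectedComponent.ind with
    | h v =>
    obtain ⟨d, hd, hr⟩ := hF.1 v
    refine ⟨d, ⟨hd, SimpleGraph.ConnectedComponent.sound hr.symm⟩, ?_⟩
    rintro d' ⟨hd', hr'⟩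
    by_contra hne
    have h2 : F.Reachable d' d := (SimpleGraph.ConnectedComponent.exact hr').trans hr
    obtain ⟨p, hp⟩ := h2.exists_isPath
    cases p with
    | nil => exact hne rfl
    | @cons _ y _ h p =>
      apply key d' y h
      rw [SimpleGraph.Walk.cons_isPath_iff] at hp
      refine cov_del D F hF.1 d' y ⟨d', hd', SimpleGraph.Reachable.refl _⟩ ⟨d, hd, ?_⟩
      refine ⟨p.toDeleteEdges _ ?_⟩
      rintro e he rfl
      exact hp.2 (p.fst_mem_support_of_mem_edges he)

/-- Projection merging the depots. -/
def proj {V : Type} [DecidableEq V] (D : Finset V) (v : V) : Option {v : V // v ∉ D} :=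
  if h : v ∈ D then none else some ⟨v, h⟩

theorem proj_mem {V : Type} [DecidableEq V] (D : Finset V) {v : V} (h : v ∈ D) :
    proj D v = none := by simp [proj, h]

theorem proj_not_mem {V : Type} [DecidableEq V] (D : Finset V) {v : V} (h : v ∉ D) :
    proj D v = some ⟨v, h⟩ := by simp [proj, h]

theorem proj_inj {V : Type} [DecidableEq V] (D : Finset V) {u v : V} (h : v ∉ D)
    (e : proj D u = proj D v) : u = v := by
  by_cases hu : u ∈ D
  · simp [proj, h, hu] at e
  · simpa [proj, h, hu] using e

/-- The image graph. -/
def imgG {V : Type} [DecidableEq V] (D : Finset V) (F : SimpleGraph V) :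
    SimpleGraph (Option {v : V // v ∉ D}) where
  Adj x y := x ≠ y ∧ ∃ a b, F.Adj a b ∧ proj D a = x ∧ proj D b = y
  symm := ⟨fun _ _ ⟨h, a, b, hab, ha, hb⟩ => ⟨h.symm, b, a, hab.symm, hb, ha⟩⟩
  loopless := ⟨fun _ h => h.1 rfl⟩

theorem img_conn {V : Type} [DecidableEq V] (D : Finset V) (F : SimpleGraph V)
    (hF : Cov D F) : (imgG D F).Connected := by
  have h1 : ∀ u v, F.Walk u v → (imgG D F).Reachable (proj D u) (proj D v) := by
    intro u v p
    induction p with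
    | nil => exact SimpleGraph.Reachable.refl _
    | @cons u v w h p ih =>
      by_cases e : proj D u = proj D v
      · rw [e]; exact ih
      · exact (SimpleGraph.Adj.reachable (G := imgG D F) ⟨e, u, v, h, rfl, rfl⟩).trans ih
  have h2 : ∀ x, (imgG D F).Reachable x none := by
    intro x
    cases x with
    | none => exact SimpleGraph.Reachable.refl _
    | some v =>
      obtain ⟨d, hd, ⟨p⟩⟩ := hF v.1
      have := h1 _ _ p
      rwa [proj_mem D hd, proj_not_mem D v.2] at this
  have : Nonempty (Option {v : V // v ∉ D}) := ⟨none⟩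
  exact ⟨fun x y => (h2 x).trans (h2 y).symm⟩

/-- The lifted graph. -/
def liftG {V : Type} [DecidableEq V] (D : Finset V) (δ : V → V)
    (T : SimpleGraph (Option {v : V // v ∉ D})) : SimpleGraph V where
  Adj a b := T.Adj (proj D a) (proj D b) ∧ (a ∈ D → a = δ b) ∧ (b ∈ D → b = δ a)
  symm := ⟨fun _ _ ⟨h, h1, h2⟩ => ⟨h.symm, h2, h1⟩⟩
  loopless := ⟨fun _ h => T.loopless.irrefl _ h.1⟩

theorem lift_cov {V : Type} [DecidableEq V] (D : Finset V) (δ : V → V) (hδ : ∀ v, δ v ∈ D)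
    (T : SimpleGraph (Option {v : V // v ∉ D})) (hT : T.Connected) : Cov D (liftG D δ T) := by
  have h1 : ∀ x y, T.Walk x y → y = none → ∀ v, proj D v = x →
      ∃ d ∈ D, (liftG D δ T).Reachable v d := by
    intro x y p
    induction p with
    | nil =>
      rintro rfl v hv
      by_cases h : v ∈ D
      · exact ⟨v, h, SimpleGraph.Reachable.refl _⟩
      · simp [proj, h] at hv
    | @cons x y z h p ih =>
      rintro hz v rfl
      by_cases hv : v ∈ D
      · exact ⟨v, hv, SimpleGraph.Reachable.refl _⟩
      cases y with
      | none =>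
        refine ⟨δ v, hδ v, SimpleGraph.Adj.reachable ⟨?_, fun h => absurd h hv, fun _ => rfl⟩⟩
        rwa [proj_mem D (hδ v)]
      | some u =>
        obtain ⟨d, hd, hr⟩ := ih hz u.1 (proj_not_mem D u.2)
        refine ⟨d, hd, SimpleGraph.Reachable.trans (SimpleGraph.Adj.reachable
          ⟨?_, fun h => absurd h hv, fun h => absurd h u.2⟩) hr⟩
        rwa [proj_not_mem D u.2]
  intro v
  obtain ⟨p⟩ := hT.preconnected (proj D v) none
  exact h1 _ _ p rfl v rfl

theorem rsf_cov {V : Type} (D : Finset V) (F : SimpleGraph V) (h : IsRSF D F) : Cov D F := by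
  intro v
  obtain ⟨d, ⟨hd, he⟩, _⟩ := h.2 (F.connectedComponentMk v)
  exact ⟨d, hd, (SimpleGraph.ConnectedComponent.exact he).symm⟩

/-- let `G'` be the complete graph on `V' = (V \ D) ∪ {d̂}` (here
`V'` is modelled as `Option {v : V // v ∉ D}`, with `none` playing the role of
the merged depot `d̂`), with weights `w'` agreeing with `w` on `V \ D` and
`w'(d̂, v) = min_{d ∈ D} w(d, v)`.  Then the minimum weight of a rooted
spanning forest of `(V, D)` equals the minimum weight of a spanning tree of
`G'`. -/
theorem stmt9 {V : Type} [Fintype V] [DecidableEq V]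
    (w : V → V → ℝ)
    (hzero : ∀ v, w v v = 0)
    (hnonneg : ∀ u v, 0 ≤ w u v)
    (hsymm : ∀ u v, w u v = w v u)
    (htri : ∀ u v x, w u x ≤ w u v + w v x)
    (D : Finset V) (hD : D.Nonempty)
    (w' : Option {v : V // v ∉ D} → Option {v : V // v ∉ D} → ℝ)
    (hw'symm : ∀ a b, w' a b = w' b a)
    (hw'some : ∀ u v : {v : V // v ∉ D}, w' (some u) (some v) = w u.1 v.1)
    (hw'none : ∀ v : {v : V // v ∉ D},
      w' none (some v) = D.inf' hD fun d => w d v.1) :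
    sInf {x : ℝ | ∃ F : SimpleGraph V,
        IsRSF D F ∧ graphWeight (Sym2.lift ⟨w, hsymm⟩) F = x}
      = sInf {x : ℝ | ∃ T : SimpleGraph (Option {v : V // v ∉ D}),
          T.IsTree ∧ graphWeight (Sym2.lift ⟨w', hw'symm⟩) T = x} := by
  have : Nonempty V := ⟨hD.choose⟩
  choose δ' hδ' using fun v : V => D.exists_mem_eq_inf' hD (fun d => w d v)
  have hproj : ∀ a b, ¬ (a ∈ D ∧ b ∈ D) → w' (proj D a) (proj D b) ≤ w a b := by
    intro a b hab
    by_cases ha : a ∈ D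
    · have hb : b ∉ D := fun hb => hab ⟨ha, hb⟩
      rw [proj_mem D ha, proj_not_mem D hb, hw'none]
      exact Finset.inf'_le _ ha
    · by_cases hb : b ∈ D
      · rw [proj_mem D hb, proj_not_mem D ha, hw'symm, hw'none, hsymm a b]
        exact Finset.inf'_le (fun d => w d a) hb
      · rw [proj_not_mem D hb, proj_not_mem D ha, hw'some]
  have hproj2 : ∀ a b, ¬ (a ∈ D ∧ b ∈ D) → (a ∈ D → a = δ' b) → (b ∈ D → b = δ' a) →
      w a b ≤ w' (proj D a) (proj D b) := by
    intro a b hab h1 h2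
    by_cases ha : a ∈ D
    · have hb : b ∉ D := fun hb => hab ⟨ha, hb⟩
      rw [proj_mem D ha, proj_not_mem D hb, hw'none, (hδ' b).2, ← h1 ha]
    · by_cases hb : b ∈ D
      · rw [proj_mem D hb, proj_not_mem D ha, hw'symm, hw'none, hsymm a b, (hδ' a).2, ← h2 hb]
      · rw [proj_not_mem D hb, proj_not_mem D ha, hw'some]
  have hw'nn : ∀ x y, x ≠ y → 0 ≤ w' x y := by
    intro x y hxy
    have hn : ∀ v, 0 ≤ w' none (some v) := by
      intro v
      rw [hw'none, (hδ' v.1).2]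
      exact hnonneg _ _
    cases x with
    | none =>
      cases y with
      | none => exact absurd rfl hxy
      | some v => exact hn v
    | some u =>
      cases y with
      | none => rw [hw'symm]; exact hn u
      | some v => rw [hw'some]; exact hnonneg _ _
  have hnn : ∀ e, 0 ≤ Sym2.lift ⟨w, hsymm⟩ e := by
    intro e
    induction e using Sym2.ind with
    | _ a b => exact hnonneg a b
  have hnnT : ∀ T : SimpleGraph (Option {v : V // v ∉ D}), ∀ e ∈ T.edgeSet,
      0 ≤ Sym2.lift ⟨w', hw'symm⟩ e := by
    intro T e
    induction e using Sym2.ind with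
    | _ a b => exact fun h => hw'nn a b (SimpleGraph.Adj.ne h)
  have A : ∀ F, IsRSF D F → ∃ T : SimpleGraph (Option {v : V // v ∉ D}), T.IsTree ∧
      graphWeight (Sym2.lift ⟨w', hw'symm⟩) T ≤ graphWeight (Sym2.lift ⟨w, hsymm⟩) F := by
    intro F hF
    obtain ⟨T, hT, hTt⟩ := (img_conn D F (rsf_cov D F hF)).exists_isTree_le
    refine ⟨T, hTt, weight_le _ _ _ _ (fun e e' => Sym2.map (proj D) e' = e) ?_ ?_ ?_ ?_⟩
    · intro e
      induction e using Sym2.ind with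
      | _ x y =>
        intro h
        obtain ⟨_, a, b, hab, rfl, rfl⟩ := hT h
        exact ⟨s(a, b), hab, rfl⟩
    · rintro e₁ _ e₂ _ e' rfl h
      exact h
    · rintro e he e' _ rfl
      induction e' using Sym2.ind with
      | _ a b =>
        refine hproj a b ?_
        rintro ⟨ha, hb⟩
        refine SimpleGraph.Adj.ne (G := T) he ?_
        change proj D a = proj D b
        rw [proj_mem D ha, proj_mem D hb]
    · exact fun e _ => hnn e
  have B : ∀ T : SimpleGraph (Option {v : V // v ∉ D}), T.IsTree → ∃ F, IsRSF D F ∧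
      graphWeight (Sym2.lift ⟨w, hsymm⟩) F ≤ graphWeight (Sym2.lift ⟨w', hw'symm⟩) T := by
    intro T hT
    obtain ⟨F, hle, hF⟩ := exists_rsf D _ (lift_cov D δ' (fun v => (hδ' v).1) T hT.connected)
    have hDD : ∀ a b, F.Adj a b → ¬ (a ∈ D ∧ b ∈ D) := by
      rintro a b hab ⟨ha, hb⟩
      refine SimpleGraph.Adj.ne (hle hab).1 ?_
      rw [proj_mem D ha, proj_mem D hb]
    have inj : ∀ a b a' b', F.Adj a b → F.Adj a' b' → proj D a = proj D a' →
        proj D b = proj D b' → a = a' ∧ b = b' := by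
      intro a b a' b' h h' ea eb
      have mm : ∀ u v, proj D u = proj D v → u ∈ D → v ∈ D := by
        intro u v e hu
        by_contra hv
        exact hv (proj_inj D hv e ▸ hu)
      by_cases ha : a ∈ D
      · have hb : b ∉ D := fun hb => hDD a b h ⟨ha, hb⟩
        have hbb : b' = b := proj_inj D hb eb.symm
        refine ⟨?_, hbb.symm⟩
        rw [(hle h).2.1 ha, (hle h').2.1 (mm _ _ ea ha), hbb]
      · have haa : a' = a := proj_inj D ha ea.symm
        refine ⟨haa.symm, ?_⟩
        by_cases hb : b ∈ D
        · rw [(hle h).2.2 hb, (hle h').2.2 (mm _ _ eb hb), haa]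
        · exact (proj_inj D hb eb.symm).symm
    refine ⟨F, hF, weight_le _ _ _ _ (fun e e' => Sym2.map (proj D) e = e') ?_ ?_ ?_ (hnnT T)⟩
    · intro e
      induction e using Sym2.ind with
      | _ x y => exact fun h => ⟨_, (hle h).1, rfl⟩
    · rintro e₁ h₁ e₂ h₂ e' rfl h
      induction e₁ using Sym2.ind with
      | _ a b =>
      induction e₂ using Sym2.ind with
      | _ a' b' =>
      rw [Sym2.map_mk, Sym2.map_mk] at h
      rcases Sym2.eq_iff.1 h with ⟨h3, h4⟩ | ⟨h3, h4⟩
      · obtain ⟨rfl, rfl⟩ := inj _ _ _ _ h₁ h₂ h3.symm h4.symm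
        rfl
      · obtain ⟨rfl, rfl⟩ := inj _ _ _ _ h₁ (SimpleGraph.Adj.symm h₂) h4.symm h3.symm
        exact Sym2.eq_swap
    · rintro e he e' _ rfl
      induction e using Sym2.ind with
      | _ a b => exact hproj2 a b (hDD a b he) (hle he).2.1 (hle he).2.2
  obtain ⟨T₀, _, hT₀⟩ := (SimpleGraph.connected_top
    (V := Option {v : V // v ∉ D})).exists_isTree_le
  obtain ⟨F₀, hF₀, _⟩ := B T₀ hT₀
  apply le_antisymm
  · refine le_csInf ⟨_, T₀, hT₀, rfl⟩ ?_
    rintro _ ⟨T, hT, rfl⟩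
    obtain ⟨F, hF, h⟩ := B T hT
    refine le_trans (csInf_le ⟨0, ?_⟩ ⟨F, hF, rfl⟩) h
    rintro _ ⟨F, _, rfl⟩
    exact Finset.sum_nonneg fun e _ => hnn e
  · refine le_csInf ⟨_, F₀, hF₀, rfl⟩ ?_
    rintro _ ⟨F, hF, rfl⟩
    obtain ⟨T, hT, h⟩ := A F hF
    refine le_trans (csInf_le ⟨0, ?_⟩ ⟨T, hT, rfl⟩) h
    rintro _ ⟨T, _, rfl⟩
    exact Finset.sum_nonneg fun e he => hnnT T e (by simpa using he)
end

section
/- Let λ and λ* be reals with λ ≥ λ* > 0, let K be a nonnegative integer, and let w_1, …, w_p be reals with w_i ≥ λ* for every i and Σ_{i=1}^{p} w_i ≤ K·λ*. Then Σ_{i : w_i ≥ 2λ} ⌊w_i / λ⌋ + |{ i : w_i < 2λ }| ≤ K. -/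
/-- arithmetic core of the paper's Lemma 4: if `λ ≥ λ* > 0`,
`K` is a nonnegative integer, and `w_1, …, w_p` are reals with `w_i ≥ λ*` for
every `i` and `Σ w_i ≤ K λ*`, then
`Σ_{i : w_i ≥ 2λ} ⌊w_i/λ⌋ + #{i : w_i < 2λ} ≤ K`. -/
theorem stmt11 (lam lamstar : ℝ) (hll : lamstar ≤ lam) (hpos : 0 < lamstar)
    (K : ℕ) (p : ℕ) (wts : Fin p → ℝ)
    (hw : ∀ i, lamstar ≤ wts i)
    (hsum : ∑ i, wts i ≤ (K : ℝ) * lamstar) :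
    (∑ i ∈ Finset.univ.filter (fun i => 2 * lam ≤ wts i), ⌊wts i / lam⌋)
        + ((Finset.univ.filter (fun i => wts i < 2 * lam)).card : ℤ)
      ≤ (K : ℤ) := by
  have hlam : 0 < lam := lt_of_lt_of_le hpos hll
  have hK : ∑ i, wts i / lamstar ≤ (K : ℝ) := by
    rw [← Finset.sum_div]
    exact (div_le_iff₀ hpos).2 hsum
  have key : (∑ i ∈ Finset.univ.filter (fun i => 2 * lam ≤ wts i), ((⌊wts i / lam⌋ : ℤ) : ℝ))
      + ∑ i ∈ Finset.univ.filter (fun i => wts i < 2 * lam), (1 : ℝ) ≤ ∑ i, wts i / lamstar := by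
    rw [← Finset.sum_filter_add_sum_filter_not Finset.univ (fun i => 2 * lam ≤ wts i)
      (fun i => wts i / lamstar)]
    simp only [not_le]
    refine add_le_add (Finset.sum_le_sum fun i _ => ?_) (Finset.sum_le_sum fun i _ => ?_)
    · exact (Int.floor_le _).trans
        (div_le_div_of_nonneg_left (hpos.le.trans (hw i)) hpos hll)
    · exact (one_le_div hpos).2 (hw i)
  have h := key.trans hK
  rw [Finset.sum_const, nsmul_eq_mul, mul_one] at h
  exact_mod_cast h
end

section
/- Let λ and λ* be reals with λ ≥ λ* > 0 and let k be a positive integer. Suppose (i) there exists a rooted tour cover (with any number of tours) whose maximum tour weight is at most λ*, and (ii) F is a forest in the complete graph G on V whose vertex set covers V, such that every edge of F has weight at most λ, exactly n_LT trees of F have weight strictly less than λ*, every other tree of F has weight at least λ*, and the total weight of the trees of weight at least λ* is at most (k − n_LT)·λ*. Then there exists a rooted tour cover with at most k tours whose maximum tour weight is at most 4λ + λ*. -/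
namespace Sol

def ed {V : Type} : V → List V → V
  | a, [] => a
  | _, b :: l => ed b l

def pw {V : Type} (w : V → V → ℝ) : V → List V → ℝ
  | _, [] => 0
  | a, b :: l => w a b + pw w b l

lemma ww {V : Type} (w : V → V → ℝ) (a : V) (l : List V) :
    walkWeight w (a :: l) = pw w a l := by
  induction l generalizing a with
  | nil => simp [walkWeight, pw]
  | cons b l ih =>
    have := ih b
    simp only [walkWeight, pw, List.tail_cons, List.zip_cons_cons, List.map_cons, List.sum_cons] at this ⊢
    rw [this]

lemma last_ed {V : Type} (a : V) (l : List V) : (a :: l).getLast? = some (ed a l) := by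
  induction l generalizing a with
  | nil => simp [ed]
  | cons b l ih => rw [List.getLast?_cons_cons, ih b]; rfl

lemma ed_append {V : Type} (a : V) (l m : List V) : ed a (l ++ m) = ed (ed a l) m := by
  induction l generalizing a with
  | nil => rfl
  | cons b l ih => exact ih b

lemma pw_append {V : Type} (w : V → V → ℝ) (a : V) (l m : List V) :
    pw w a (l ++ m) = pw w a l + pw w (ed a l) m := by
  induction l generalizing a with
  | nil => simp [pw, ed]
  | cons b l ih => simp [pw, ed, ih b, add_assoc]

lemma le_pw {V : Type} (w : V → V → ℝ) (hzero : ∀ v, w v v = 0)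
    (htri : ∀ u v x, w u x ≤ w u v + w v x) (a : V) (l : List V) :
    w a (ed a l) ≤ pw w a l := by
  induction l generalizing a with
  | nil => simp [pw, ed, hzero]
  | cons b l ih =>
    have := ih b
    have := htri a b (ed b l)
    simp only [pw, ed]; linarith

lemma compress {V : Type} [DecidableEq V] (w : V → V → ℝ) (hzero : ∀ v, w v v = 0)
    (a : V) (l : List V) : ∃ l', ed a l' = ed a l ∧ pw w a l' = pw w a l ∧
      (∀ v, v ∈ a :: l' ↔ v ∈ a :: l) ∧ (a :: l').IsChain (· ≠ ·) := by
  induction l generalizing a with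
  | nil => exact ⟨[], rfl, rfl, by simp, by simp⟩
  | cons b l ih =>
    obtain ⟨l', h1, h2, h3, h4⟩ := ih b
    by_cases hab : a = b
    · subst hab
      exact ⟨l', h1, by simp [pw, h2, hzero], by intro v; rw [h3]; simp, h4⟩
    · refine ⟨b :: l', h1, by simp [pw, h2], ?_, ?_⟩
      · intro v; rw [List.mem_cons, h3, ← List.mem_cons]
      · exact List.isChain_cons_cons.2 ⟨hab, h4⟩

lemma near {V : Type} (w : V → V → ℝ) (hzero : ∀ v, w v v = 0)
    (hsymm : ∀ u v, w u v = w v u)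
    (htri : ∀ u v x, w u x ≤ w u v + w v x) (p : List V) (d v : V)
    (hp : IsClosedWalkAt p d) (hv : v ∈ p) : 2 * w d v ≤ walkWeight w p := by
  obtain ⟨h0, h1, h2, -⟩ := hp
  cases p with
  | nil => simp at h0
  | cons a l =>
    simp only [List.head?_cons, Option.some.injEq] at h1
    subst h1
    rw [last_ed] at h2
    simp only [Option.some.injEq] at h2
    rw [ww]
    have key : ∃ l1 l2, l = l1 ++ l2 ∧ ed a l1 = v := by
      rcases List.mem_cons.1 hv with h | h
      · exact ⟨[], l, rfl, h.symm⟩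
      · obtain ⟨s, t, rfl⟩ := List.append_of_mem h
        exact ⟨s ++ [v], t, by simp, by rw [ed_append]; rfl⟩
    obtain ⟨l1, l2, rfl, rfl⟩ := key
    have e1 := le_pw w hzero htri a l1
    have e2 := le_pw w hzero htri (ed a l1) l2
    rw [← ed_append, h2, hsymm] at e2
    rw [pw_append]; linarith

inductive RT (V : Type) : Type
  | leaf (v : V) : RT V
  | join (t s : RT V) : RT V

namespace RT
variable {V : Type}

def root : RT V → V
  | leaf v => v
  | join t _ => t.root

def vs : RT V → List V
  | leaf v => [v]
  | join t s => t.vs ++ s.vs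

def wt (w : V → V → ℝ) : RT V → ℝ
  | leaf _ => 0
  | join t s => t.wt w + (s.wt w + w t.root s.root)

def ok (w : V → V → ℝ) (lam : ℝ) : RT V → Prop
  | leaf _ => True
  | join t s => t.ok w lam ∧ s.ok w lam ∧ w t.root s.root ≤ lam

def tl : RT V → List V
  | leaf _ => []
  | join t s => t.tl ++ s.root :: (s.tl ++ [t.root])

lemma ed_tl (t : RT V) : ed t.root t.tl = t.root := by
  induction t with
  | leaf v => rfl
  | join t s iht ihs =>
    simp only [root, tl, ed_append, ed]

lemma pw_tl (w : V → V → ℝ) (hsymm : ∀ u v, w u v = w v u) (t : RT V) :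
    pw w t.root t.tl = 2 * t.wt w := by
  induction t with
  | leaf v => simp [pw, tl, wt]
  | join t s iht ihs =>
    simp only [root, tl, pw_append, wt, pw, ihs, iht, ed_tl, hsymm s.root t.root]
    ring

lemma mem_tl (t : RT V) (v : V) (hv : v ∈ t.vs) : v ∈ t.root :: t.tl := by
  induction t with
  | leaf u => simpa [root, vs, tl] using hv
  | join t s iht ihs =>
    simp only [vs, List.mem_append] at hv
    simp only [root, tl, List.mem_cons, List.mem_append] at *
    tauto

lemma root_mem (t : RT V) : t.root ∈ t.vs := by
  induction t with
  | leaf u => simp [root, vs]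
  | join t s iht ihs => simp [root, vs, iht]

lemma wt_nonneg (w : V → V → ℝ) (hnonneg : ∀ u v, 0 ≤ w u v) (t : RT V) : 0 ≤ t.wt w := by
  induction t with
  | leaf u => simp [wt]
  | join t s iht ihs => have := hnonneg t.root s.root; simp only [wt]; linarith

lemma graft (w : V → V → ℝ) (lam : ℝ) (u x : V) (hux : w u x ≤ lam) (t : RT V)
    (hu : u ∈ t.vs) (ht : t.ok w lam) :
    ∃ t' : RT V, t'.root = t.root ∧ t'.wt w = t.wt w + w u x ∧ t'.ok w lam ∧
      ∀ v, v ∈ t'.vs ↔ v = x ∨ v ∈ t.vs := by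
  induction t with
  | leaf y =>
    simp only [vs, List.mem_singleton] at hu
    subst hu
    refine ⟨join (leaf u) (leaf x), rfl, by simp [wt, root], by simp [ok, root, hux], ?_⟩
    intro v; simp [vs, or_comm]
  | join t s iht ihs =>
    obtain ⟨o1, o2, o3⟩ := ht
    rcases List.mem_append.1 hu with h | h
    · obtain ⟨t', h1, h2, h3, h4⟩ := iht h o1
      refine ⟨join t' s, by simp [root, h1], by simp only [wt, h2, h1]; ring,
        ⟨h3, o2, by rw [h1]; exact o3⟩, ?_⟩
      intro v; simp only [vs, List.mem_append, h4]; tauto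
    · obtain ⟨t', h1, h2, h3, h4⟩ := ihs h o2
      refine ⟨join t t', by simp [root], by simp only [wt, h2, h1]; ring,
        ⟨o1, h3, by rw [h1]; exact o3⟩, ?_⟩
      intro v; simp only [vs, List.mem_append, h4]; tauto

lemma peel (w : V → V → ℝ) (lam ls : ℝ) (hll : ls ≤ lam)
    (t : RT V) (hpos : 0 < ls) (ht : t.ok w lam) (hw : ls ≤ t.wt w) :
    ∃ A B : RT V, B.root = t.root ∧ A.wt w + B.wt w = t.wt w ∧ ls ≤ A.wt w ∧
      A.wt w ≤ 2 * lam ∧ B.ok w lam ∧ ∀ v ∈ t.vs, v ∈ A.vs ∨ v ∈ B.vs := by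
  induction t with
  | leaf y => simp only [wt] at hw; linarith
  | join t s iht ihs =>
    obtain ⟨o1, o2, o3⟩ := ht
    by_cases c1 : ls ≤ s.wt w
    · obtain ⟨A, B, h1, h2, h3, h4, h5, h6⟩ := ihs o2 c1
      refine ⟨A, join t B, rfl, by simp only [wt, h1]; linarith, h3, h4,
        ⟨o1, h5, by rw [h1]; exact o3⟩, ?_⟩
      intro v hv
      simp only [vs, List.mem_append] at hv ⊢
      have := h6 v
      tauto
    by_cases c2 : ls ≤ s.wt w + w t.root s.root
    · refine ⟨join (leaf t.root) s, t, rfl, by simp only [wt, root]; ring, by simpa [wt, root],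
        by simp only [wt, root]; linarith, o1, ?_⟩
      intro v hv
      simp only [vs, List.mem_append] at hv ⊢
      tauto
    by_cases c3 : ls ≤ t.wt w
    · obtain ⟨A, B, h1, h2, h3, h4, h5, h6⟩ := iht o1 c3
      refine ⟨A, join B s, h1, by simp only [wt, h1]; linarith, h3, h4,
        ⟨h5, o2, by rw [h1]; exact o3⟩, ?_⟩
      intro v hv
      simp only [vs, List.mem_append] at hv ⊢
      have := h6 v
      tauto
    · refine ⟨join t s, leaf t.root, rfl, by simp only [wt, add_zero], hw,
        by simp only [wt]; linarith, trivial, fun v hv => Or.inl hv⟩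

lemma split (w : V → V → ℝ) (lam ls : ℝ) (hll : ls ≤ lam) (hpos : 0 < ls) (n : ℕ) :
    ∀ t : RT V, t.ok w lam → t.wt w ≤ n * ls →
    ∃ Q : List (RT V), (∀ A ∈ Q, A.wt w ≤ 2 * lam) ∧ (∀ v ∈ t.vs, ∃ A ∈ Q, v ∈ A.vs) ∧
      (Q.length ≤ 1 ∨ (Q.length : ℝ) * ls ≤ t.wt w) := by
  induction n with
  | zero =>
    intro t _ h
    refine ⟨[t], ?_, by simp, by simp⟩
    simp at h ⊢; linarith
  | succ n ih =>
    intro t ht h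
    by_cases c : t.wt w ≤ 2 * lam
    · exact ⟨[t], by simpa using c, by simp, by simp⟩
    obtain ⟨A, B, h1, h2, h3, h4, h5, h6⟩ := peel w lam ls hll t hpos ht (by linarith)
    by_cases c2 : ls ≤ B.wt w
    · push_cast at h
      obtain ⟨Q, q1, q2, q3⟩ := ih B h5 (by linarith)
      refine ⟨A :: Q, ?_, ?_, Or.inr ?_⟩
      · intro X hX
        rcases List.mem_cons.1 hX with rfl | hX
        · exact h4
        · exact q1 X hX
      · intro v hv
        rcases h6 v hv with h | h
        · exact ⟨A, by simp, h⟩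
        · obtain ⟨X, hX, hv⟩ := q2 v h
          exact ⟨X, by simp [hX], hv⟩
      · have : (Q.length : ℝ) * ls ≤ B.wt w := by
          rcases q3 with q3 | q3
          · have : (Q.length : ℝ) ≤ 1 := by exact_mod_cast q3
            nlinarith
          · exact q3
        rw [List.length_cons]; push_cast; linarith
    · refine ⟨[A, B], ?_, ?_, Or.inr ?_⟩
      · intro X hX
        simp only [List.mem_cons, List.not_mem_nil, or_false] at hX
        rcases hX with rfl | rfl
        · exact h4
        · linarith
      · intro v hv
        simpa using h6 v hv
      · simp; linarith

end RT

lemma grow {V : Type} [Fintype V] [DecidableEq V] (w : V → V → ℝ)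
    (hsymm : ∀ u v, w u v = w v u) (hnonneg : ∀ u v, 0 ≤ w u v) (lam : ℝ)
    (H : (⊤ : SimpleGraph V).Subgraph) (hc : H.Connected)
    (he : ∀ e ∈ H.edgeSet, Sym2.lift ⟨w, hsymm⟩ e ≤ lam) :
    ∃ t : RT V, t.ok w lam ∧ (∀ v ∈ H.verts, v ∈ t.vs) ∧
      t.wt w ≤ subWeight (Sym2.lift ⟨w, hsymm⟩) H := by
  have main : ∀ n : ℕ, ∀ (t : RT V) (E : Finset (Sym2 V)),
      t.ok w lam → (∀ v ∈ t.vs, v ∈ H.verts) → (∀ e ∈ E, e ∈ H.edgeSet ∧ ∀ x ∈ e, x ∈ t.vs) →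
      t.wt w ≤ ∑ e ∈ E, Sym2.lift ⟨w, hsymm⟩ e →
      Fintype.card V - t.vs.toFinset.card ≤ n →
      ∃ t : RT V, t.ok w lam ∧ (∀ v ∈ H.verts, v ∈ t.vs) ∧
      t.wt w ≤ subWeight (Sym2.lift ⟨w, hsymm⟩) H := by
    intro n
    induction n with
    | zero =>
      intro t E a1 a2 a3 a4 a5
      refine ⟨t, a1, ?_, a4.trans ?_⟩
      · have h1 := Finset.card_le_univ t.vs.toFinset
        have h2 : t.vs.toFinset = Finset.univ := by
          rw [← Finset.card_eq_iff_eq_univ]; omega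
        intro v _
        have := Finset.mem_univ v
        rw [← h2] at this
        simpa using this
      · unfold subWeight
        apply Finset.sum_le_sum_of_subset_of_nonneg
        · intro e hE; simpa using (a3 e hE).1
        · intro e _ _; induction e with | _ a b => exact hnonneg a b
    | succ n ih =>
      intro t E a1 a2 a3 a4 a5
      by_cases hall : ∀ v ∈ H.verts, v ∈ t.vs
      · refine ⟨t, a1, hall, a4.trans ?_⟩
        unfold subWeight
        apply Finset.sum_le_sum_of_subset_of_nonneg
        · intro e hE; simpa using (a3 e hE).1
        · intro e _ _; induction e with | _ a b => exact hnonneg a b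
      push Not at hall
      obtain ⟨z, hz, hzt⟩ := hall
      obtain ⟨p⟩ := hc.coe.preconnected ⟨t.root, a2 _ t.root_mem⟩ ⟨z, hz⟩
      obtain ⟨d, -, d1, d2⟩ := p.exists_boundary_dart {y | y.1 ∈ t.vs} t.root_mem hzt
      have hadj : H.Adj d.fst.1 d.snd.1 := d.adj
      set u := d.fst.1
      set x := d.snd.1
      have hu : u ∈ t.vs := d1
      have hx : x ∉ t.vs := d2
      obtain ⟨t', b1, b2, b3, b4⟩ := RT.graft w lam u x (he s(u, x) hadj) t hu a1
      have hnot : s(u, x) ∉ E := fun h => hx ((a3 _ h).2 x (by simp))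
      refine ih t' (insert s(u, x) E) b3 ?_ ?_ ?_ ?_
      · intro v hv
        rcases (b4 v).1 hv with rfl | h
        · exact H.edge_vert hadj.symm
        · exact a2 v h
      · intro e hE
        rcases Finset.mem_insert.1 hE with rfl | h
        · refine ⟨hadj, ?_⟩
          intro y hy
          rw [b4]
          rcases Sym2.mem_iff.1 hy with rfl | rfl
          · exact Or.inr hu
          · exact Or.inl rfl
        · exact ⟨(a3 e h).1, fun y hy => (b4 y).2 (Or.inr ((a3 e h).2 y hy))⟩
      · rw [Finset.sum_insert hnot, b2]
        have : Sym2.lift ⟨w, hsymm⟩ s(u, x) = w u x := rfl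
        linarith
      · have hins : t'.vs.toFinset = insert x t.vs.toFinset := by
          ext v; simp [b4]
        rw [hins, Finset.card_insert_of_notMem (by simpa using hx)]
        omega
  obtain ⟨r⟩ := hc.coe.nonempty
  exact main (Fintype.card V) (RT.leaf r.1) ∅ trivial (by simp [RT.vs])
    (by simp) (by simp [RT.wt]) (Nat.sub_le _ _)

end Sol

/-- let `λ ≥ λ* > 0` and `k ≥ 1`.  Suppose (i) there is a rooted
tour cover (with any number of tours) of maximum tour weight at most `λ*`, and
(ii) `F` is a forest (given by its pairwise vertex-disjoint trees) covering
`V`, with all edges of weight at most `λ`, exactly `n_LT` trees of weight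
`< λ*`, all other trees of weight `≥ λ*`, and total weight of the trees of
weight `≥ λ*` at most `(k − n_LT) λ*`.  Then there is a rooted tour cover with
at most `k` tours of maximum tour weight at most `4λ + λ*`. -/
theorem stmt13 {V : Type} [Fintype V] [DecidableEq V]
    (w : V → V → ℝ)
    (hzero : ∀ v, w v v = 0)
    (hnonneg : ∀ u v, 0 ≤ w u v)
    (hsymm : ∀ u v, w u v = w v u)
    (htri : ∀ u v x, w u x ≤ w u v + w v x)
    (D : Finset V) (hD : D.Nonempty)
    (lam lamstar : ℝ) (hll : lamstar ≤ lam) (hpos : 0 < lamstar)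
    (k : ℕ) (hk : 0 < k) (nLT : ℕ)
    (ι : Type) (opt : ι → List V)
    (hoptclosed : ∀ i, ∃ d ∈ D, IsClosedWalkAt (opt i) d)
    (hoptcov : ∀ v : V, ∃ i, v ∈ opt i)
    (hoptwt : ∀ i, walkWeight w (opt i) ≤ lamstar)
    (q : ℕ) (T : Fin q → (⊤ : SimpleGraph V).Subgraph)
    (hconn : ∀ i, (T i).Connected)
    (hacyc : ∀ i, (T i).coe.IsAcyclic)
    (hdisj : ∀ i j, i ≠ j → Disjoint (T i).verts (T j).verts)
    (hcov : ∀ v : V, ∃ i, v ∈ (T i).verts)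
    (hedge : ∀ i, ∀ e ∈ (T i).edgeSet, Sym2.lift ⟨w, hsymm⟩ e ≤ lam)
    (hlight : (Finset.univ.filter
        (fun i => subWeight (Sym2.lift ⟨w, hsymm⟩) (T i) < lamstar)).card
      = nLT)
    (hheavy : ∑ i ∈ Finset.univ.filter
          (fun i => lamstar ≤ subWeight (Sym2.lift ⟨w, hsymm⟩) (T i)),
        subWeight (Sym2.lift ⟨w, hsymm⟩) (T i)
      ≤ ((k : ℝ) - (nLT : ℝ)) * lamstar) :
    ∃ (q' : ℕ) (_ : q' ≤ k) (tours : Fin q' → List V),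
      (∀ i, ∃ d ∈ D, IsClosedWalkAt (tours i) d) ∧
      (∀ v : V, ∃ i, v ∈ tours i) ∧
      (∀ i, walkWeight w (tours i) ≤ 4 * lam + lamstar) := by
  classical
  have hnear : ∀ v, ∃ d ∈ D, 2 * w d v ≤ lamstar := by
    intro v
    obtain ⟨i, hi⟩ := hoptcov v
    obtain ⟨d, hd, hcl⟩ := hoptclosed i
    exact ⟨d, hd, (Sol.near w hzero hsymm htri _ d v hcl hi).trans (hoptwt i)⟩
  have htour : ∀ t : Sol.RT V, t.wt w ≤ 2 * lam → ∃ p : List V, (∃ d ∈ D, IsClosedWalkAt p d) ∧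
      (∀ v ∈ t.vs, v ∈ p) ∧ walkWeight w p ≤ 4 * lam + lamstar := by
    intro t ht
    obtain ⟨d, hd, hdw⟩ := hnear t.root
    obtain ⟨l, l1, l2, l3, l4⟩ := Sol.compress w hzero d (t.root :: (t.tl ++ [d]))
    refine ⟨d :: l, ⟨d, hd, by simp, by simp, ?_, l4⟩, ?_, ?_⟩
    · rw [Sol.last_ed, l1]; simp [Sol.ed, Sol.ed_append]
    · intro v hv
      rw [l3]
      have := t.mem_tl v hv
      simp only [List.mem_cons, List.mem_append] at this ⊢
      tauto
    · rw [Sol.ww, l2]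
      simp only [Sol.pw, Sol.pw_append, t.pw_tl w hsymm, t.ed_tl, hsymm t.root d]
      linarith
  set W := fun i => subWeight (Sym2.lift ⟨w, hsymm⟩) (T i) with hW
  have hQ : ∀ i, ∃ Q : List (Sol.RT V), (∀ A ∈ Q, A.wt w ≤ 2 * lam) ∧
      (∀ v ∈ (T i).verts, ∃ A ∈ Q, v ∈ A.vs) ∧
      (Q.length ≤ 1 ∨ (Q.length : ℝ) * lamstar ≤ W i) := by
    intro i
    obtain ⟨t, t1, t2, t3⟩ := Sol.grow w hsymm hnonneg lam (T i) (hconn i) (hedge i)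
    obtain ⟨n, hn⟩ := exists_nat_ge (t.wt w / lamstar)
    obtain ⟨Q, q1, q2, q3⟩ := Sol.RT.split w lam lamstar hll hpos n t t1
      ((div_le_iff₀ hpos).1 hn)
    exact ⟨Q, q1, fun v hv => q2 v (t2 v hv), q3.imp id (fun h => h.trans t3)⟩
  choose Q q1 q2 q3 using hQ
  have hcount : ∑ i, (Q i).length ≤ k := by
    have hb : ∀ i, ((Q i).length : ℝ) * lamstar ≤
        if W i < lamstar then lamstar else W i := by
      intro i
      have h1 : (Q i).length ≤ 1 → ((Q i).length : ℝ) * lamstar ≤ lamstar := by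
        intro h
        have : ((Q i).length : ℝ) ≤ 1 := by exact_mod_cast h
        nlinarith
      split_ifs with h
      · rcases q3 i with h' | h'
        · exact h1 h'
        · linarith
      · rcases q3 i with h' | h'
        · have := h1 h'; linarith
        · exact h'
    have hs := Finset.sum_le_sum (fun i (_ : i ∈ Finset.univ) => hb i)
    rw [Finset.sum_ite, Finset.sum_const, hlight, ← Finset.sum_mul] at hs
    simp only [not_lt, nsmul_eq_mul] at hs
    have : (∑ i, ((Q i).length : ℝ)) * lamstar ≤ k * lamstar := by
      have := hheavy
      linarith
    have := le_of_mul_le_mul_right this hpos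
    exact_mod_cast this
  let I := Σ i : Fin q, Fin (Q i).length
  have hI : Fintype.card I = ∑ i, (Q i).length := by simp [I]
  choose! tour t1 t2 t3 using htour
  let e : Fin (Fintype.card I) ≃ I := (Fintype.equivFin I).symm
  have hm : ∀ x : I, ((Q x.1).get x.2).wt w ≤ 2 * lam := fun x => q1 _ _ (List.get_mem _ _)
  refine ⟨Fintype.card I, hI ▸ hcount, fun j => tour ((Q (e j).1).get (e j).2), ?_, ?_, ?_⟩
  · intro j; exact t1 _ (hm _)
  · intro v
    obtain ⟨i, hi⟩ := hcov v
    obtain ⟨A, hA, hv⟩ := q2 i v hi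
    obtain ⟨m, rfl⟩ := List.get_of_mem hA
    refine ⟨e.symm ⟨i, m⟩, ?_⟩
    show v ∈ tour ((Q (e (e.symm ⟨i, m⟩)).1).get (e (e.symm ⟨i, m⟩)).2)
    rw [Equiv.apply_symm_apply]
    exact t2 _ (hm ⟨i, m⟩) v hv
  · intro j; exact t3 _ (hm _)
end
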